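/- Let n ≥ 2 and let P be a polytope realizing the type D_n model. Then there exists a finite sequence of polytopes P_0, P_1, …, P_m in ℝ^n such that P_0 = [0,1]^n, for each i the polytope P_{i+1} is obtained from P_i by shaving off a face of codimension 2 (i.e., there exist a face G_i of P_i with dim G_i = dim P_i − 2 and a closed halfspace H_i ⊂ ℝ^n with G_i ∩ H_i = ∅, every vertex of P_i not contained in G_i lying in the interior of H_i, and P_{i+1} = P_i ∩ H_i), and P_m is combinatorially equivalent to P. (Generalized associahedra of type D_n lie in the class P^cube.) -/

import Mathlib

open Pointwise

namespace GalD

/-- A polytope in `ℝ^d`: the convex hull of a finite set of points. -/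
def IsPolytope {d : ℕ} (P : Set (Fin d → ℝ)) : Prop :=
  ∃ V : Finset (Fin d → ℝ), P = convexHull ℝ (V : Set (Fin d → ℝ))

/-- A face of `P`: a nonempty exposed face of `P` (`P` itself included). -/
def IsFaceOf {d : ℕ} (F P : Set (Fin d → ℝ)) : Prop :=
  F.Nonempty ∧ IsExposed ℝ P F

/-- The dimension of a set: the rank of the direction of its affine span. -/
noncomputable def polyDim {d : ℕ} (P : Set (Fin d → ℝ)) : ℕ :=
  Module.finrank ℝ (affineSpan ℝ P).direction

/-- A facet: a face of dimension `dim P - 1`. -/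
def IsFacetOf {d : ℕ} (F P : Set (Fin d → ℝ)) : Prop :=
  IsFaceOf F P ∧ polyDim F + 1 = polyDim P

/-- A vertex: a point spanning a face of dimension 0. -/
def IsVertexOf {d : ℕ} (v : Fin d → ℝ) (P : Set (Fin d → ℝ)) : Prop :=
  IsFaceOf {v} P

/-- A simple polytope: every vertex is contained in exactly `dim P` facets. -/
def IsSimplePolytope {d : ℕ} (P : Set (Fin d → ℝ)) : Prop :=
  IsPolytope P ∧ ∀ v, IsVertexOf v P →
    {F : Set (Fin d → ℝ) | IsFacetOf F P ∧ v ∈ F}.ncard = polyDim P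

/-- A flag polytope: simple, and every collection of pairwise intersecting facets
has a nonempty common intersection. -/
def IsFlagPolytope {d : ℕ} (P : Set (Fin d → ℝ)) : Prop :=
  IsSimplePolytope P ∧
  ∀ 𝒮 : Set (Set (Fin d → ℝ)), 𝒮.Nonempty → (∀ F ∈ 𝒮, IsFacetOf F P) →
    (∀ F ∈ 𝒮, ∀ G ∈ 𝒮, (F ∩ G).Nonempty) → (⋂₀ 𝒮).Nonempty

/-- Combinatorial equivalence: an order isomorphism between the face posets. -/
def CombEquiv {d₁ d₂ : ℕ} (P : Set (Fin d₁ → ℝ)) (Q : Set (Fin d₂ → ℝ)) : Prop :=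
  Nonempty ({F : Set (Fin d₁ → ℝ) // IsFaceOf F P} ≃o
            {G : Set (Fin d₂ → ℝ) // IsFaceOf G Q})

/-- The product of a set in `ℝ^{d₁}` and a set in `ℝ^{d₂}`, inside `ℝ^{d₁+d₂}`. -/
def polyProd {d₁ d₂ : ℕ} (Q : Set (Fin d₁ → ℝ)) (R : Set (Fin d₂ → ℝ)) :
    Set (Fin (d₁ + d₂) → ℝ) :=
  {x | (fun i => x (Fin.castAdd d₂ i)) ∈ Q ∧ (fun j => x (Fin.natAdd d₁ j)) ∈ R}

/-- `P` is not combinatorially equivalent to a nontrivial product of two polytopes. -/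
def Indecomposable {d : ℕ} (P : Set (Fin d → ℝ)) : Prop :=
  ¬ ∃ (d₁ d₂ : ℕ) (Q : Set (Fin d₁ → ℝ)) (R : Set (Fin d₂ → ℝ)),
    IsPolytope Q ∧ IsPolytope R ∧ 1 ≤ polyDim Q ∧ 1 ≤ polyDim R ∧
    CombEquiv P (polyProd Q R)

/-- A building set on the ground set `V`. -/
structure IsBuildingSetOn {m : ℕ} (V : Finset (Fin m)) (B : Finset (Finset (Fin m))) :
    Prop where
  subset_ground : ∀ S ∈ B, S ⊆ V
  nonempty_mem : ∀ S ∈ B, S.Nonempty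
  singleton_mem : ∀ i ∈ V, ({i} : Finset (Fin m)) ∈ B
  ground_mem : V ∈ B
  union_mem : ∀ S₁ ∈ B, ∀ S₂ ∈ B, (S₁ ∩ S₂).Nonempty → S₁ ∪ S₂ ∈ B

/-- A connected building set on `[m]`. -/
def IsConnectedBuildingSet (m : ℕ) (B : Finset (Finset (Fin m))) : Prop :=
  IsBuildingSetOn (Finset.univ : Finset (Fin m)) B

/-- The nestohedron `P_B`: the Minkowski sum of the simplices `Δ_S`, `S ∈ B`. -/
noncomputable def nestohedron (m : ℕ) (B : Finset (Finset (Fin m))) :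
    Set (Fin m → ℝ) :=
  ∑ S ∈ B, convexHull ℝ ((fun i => (Pi.single i 1 : Fin m → ℝ)) '' (S : Set (Fin m)))

/-- A diagonal of a convex `N`-gon with vertices labelled by `ZMod N`. -/
def IsDiag (N : ℕ) (e : Finset (ZMod N)) : Prop :=
  ∃ a b : ZMod N, e = {a, b} ∧ b ≠ a ∧ b ≠ a + 1 ∧ b ≠ a - 1

/-- `c` lies strictly between `a` and `b` on the arc from `a` to `b` (counterclockwise). -/
def StrictBtw (N : ℕ) (a c b : ZMod N) : Prop :=
  0 < (c - a).val ∧ (c - a).val < (b - a).val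

/-- Two diagonals cross: their endpoints alternate around the circle. -/
def Crosses (N : ℕ) (e f : Finset (ZMod N)) : Prop :=
  ∃ a b c d : ZMod N, e = {a, b} ∧ f = {c, d} ∧
    StrictBtw N a c b ∧ StrictBtw N b d a

/-- Image of a diagonal under the central symmetry `a ↦ a + n` of the `2n`-gon. -/
def centralSym (n : ℕ) (e : Finset (ZMod (2 * n))) : Finset (ZMod (2 * n)) :=
  e.image (· + (n : ZMod (2 * n)))

/-- A diameter of the `2n`-gon: a diagonal `{a, a + n}`. -/
def IsDiameter (n : ℕ) (e : Finset (ZMod (2 * n))) : Prop :=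
  ∃ a : ZMod (2 * n), e = {a, a + (n : ZMod (2 * n))}

/-- Raw elements of the type `D_n` model: symmetric pairs of diagonals,
red diameters and blue diameters. -/
inductive DElem (n : ℕ) where
  | pair : Finset (Finset (ZMod (2 * n))) → DElem n
  | red  : Finset (ZMod (2 * n)) → DElem n
  | blue : Finset (ZMod (2 * n)) → DElem n

/-- Membership in the set `M_n` of the type `D_n` model. -/
def memM (n : ℕ) : DElem n → Prop
  | .pair s => ∃ e, IsDiag (2 * n) e ∧ ¬ IsDiameter n e ∧ s = {e, centralSym n e}
  | .red e => IsDiag (2 * n) e ∧ IsDiameter n e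
  | .blue e => IsDiag (2 * n) e ∧ IsDiameter n e

/-- Compatibility of elements of the type `D_n` model. -/
def DCompat (n : ℕ) : DElem n → DElem n → Prop
  | .pair s, .pair t => ∀ e ∈ s, ∀ f ∈ t, ¬ Crosses (2 * n) e f
  | .pair s, .red e => ∀ f ∈ s, ¬ Crosses (2 * n) e f
  | .pair s, .blue e => ∀ f ∈ s, ¬ Crosses (2 * n) e f
  | .red e, .pair s => ∀ f ∈ s, ¬ Crosses (2 * n) e f
  | .blue e, .pair s => ∀ f ∈ s, ¬ Crosses (2 * n) e f
  | .red _, .red _ => True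
  | .blue _, .blue _ => True
  | .red e, .blue f => e = f
  | .blue e, .red f => e = f

/-- The set `M_n` of the type `D_n` model, as a type. -/
def MSet (n : ℕ) := {x : DElem n // memM n x}

/-- `P` realizes the type `D_n` model via the bijection `φ`. -/
def RealizesDWith (n : ℕ) {d : ℕ} (P : Set (Fin d → ℝ))
    (φ : MSet n → Set (Fin d → ℝ)) : Prop :=
  IsPolytope P ∧ IsFlagPolytope P ∧ polyDim P = n ∧
  (∀ x, IsFacetOf (φ x) P) ∧ Function.Injective φ ∧
  (∀ F, IsFacetOf F P → ∃ x, φ x = F) ∧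
  ∀ x y : MSet n, x ≠ y → ((φ x ∩ φ y).Nonempty ↔ DCompat n x.1 y.1)

/-- `P` realizes the type `D_n` model. -/
def RealizesD (n : ℕ) {d : ℕ} (P : Set (Fin d → ℝ)) : Prop :=
  ∃ φ, RealizesDWith n P φ

/-- Elements of the type `A_k` model: diagonals of a convex `(k+3)`-gon. -/
def ASet (k : ℕ) := {e : Finset (ZMod (k + 3)) // IsDiag (k + 3) e}

/-- `P` realizes the type `A_k` model via the bijection `φ`. -/
def RealizesAWith (k : ℕ) {d : ℕ} (P : Set (Fin d → ℝ))
    (φ : ASet k → Set (Fin d → ℝ)) : Prop :=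
  IsPolytope P ∧ IsFlagPolytope P ∧ polyDim P = k ∧
  (∀ x, IsFacetOf (φ x) P) ∧ Function.Injective φ ∧
  (∀ F, IsFacetOf F P → ∃ x, φ x = F) ∧
  ∀ x y : ASet k, x ≠ y → ((φ x ∩ φ y).Nonempty ↔ ¬ Crosses (k + 3) x.1 y.1)

/-- `P` realizes the type `A_k` model. -/
def RealizesA (k : ℕ) {d : ℕ} (P : Set (Fin d → ℝ)) : Prop :=
  ∃ φ, RealizesAWith k P φ

/-- A closed halfspace in `ℝ^d`. -/
def IsClosedHalfspace {d : ℕ} (H : Set (Fin d → ℝ)) : Prop :=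
  ∃ (l : (Fin d → ℝ) →ₗ[ℝ] ℝ) (c : ℝ), l ≠ 0 ∧ H = {x | l x ≤ c}

/-- `P'` is obtained from `P` by shaving off a face of codimension 2. -/
def ObtainedByShaving {d : ℕ} (P P' : Set (Fin d → ℝ)) : Prop :=
  ∃ G H : Set (Fin d → ℝ), IsFaceOf G P ∧ polyDim G + 2 = polyDim P ∧
    IsClosedHalfspace H ∧ G ∩ H = ∅ ∧
    (∀ v, IsVertexOf v P → v ∉ G → v ∈ interior H) ∧ P' = P ∩ H

/-- The restriction `B|_S` of a building set. -/
def restrictBS {m : ℕ} (B : Finset (Finset (Fin m))) (S : Finset (Fin m)) :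
    Finset (Finset (Fin m)) :=
  B.filter (· ⊆ S)

/-- The contraction `B / S` of a building set. -/
def contractBS {m : ℕ} (B : Finset (Finset (Fin m))) (S : Finset (Fin m)) :
    Finset (Finset (Fin m)) :=
  (B.filter (fun S'' => ¬ S'' ⊆ S)).image (fun S'' => S'' \ S)

/-- The subset of the nestohedron `P_B` on which `x ↦ ∑_{i ∈ S} x i` is minimized. -/
def minFace (m : ℕ) (B : Finset (Finset (Fin m))) (S : Finset (Fin m)) :
    Set (Fin m → ℝ) :=
  {x ∈ nestohedron m B | ∀ y ∈ nestohedron m B, ∑ i ∈ S, x i ≤ ∑ i ∈ S, y i}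



/-- A description of `P` by inequalities inside a translate of `W`. -/
structure HRep {d : ℕ} {ι : Type} (P : Set (Fin d → ℝ)) (W : Submodule ℝ (Fin d → ℝ))
    (I : Finset ι) (l : ι → (Fin d → ℝ) →ₗ[ℝ] ℝ) (c : ι → ℝ) : Prop where
  le : ∀ x ∈ P, ∀ i ∈ I, l i x ≤ c i
  dir : ∀ x ∈ P, ∀ y ∈ P, y - x ∈ W
  mem : ∀ x ∈ P, ∀ u ∈ W, (∀ i ∈ I, l i (x + u) ≤ c i) → x + u ∈ P

/-- A simple description: the active constraints at any point are independent. -/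
structure Rep {d : ℕ} {ι : Type} (P : Set (Fin d → ℝ)) (W : Submodule ℝ (Fin d → ℝ))
    (I : Finset ι) (l : ι → (Fin d → ℝ) →ₗ[ℝ] ℝ) (c : ι → ℝ) : Prop
    extends HRep P W I l c where
  indep : ∀ x ∈ P, ∀ t : ι → ℝ, ∃ u ∈ W, ∀ i ∈ I, l i x = c i → l i u = t i

/-- The set where all constraints in `τ` are tight. -/
def Fc {d : ℕ} {ι : Type} (P : Set (Fin d → ℝ))
    (l : ι → (Fin d → ℝ) →ₗ[ℝ] ℝ) (c : ι → ℝ) (τ : Finset ι) : Set (Fin d → ℝ) :=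
  {x | x ∈ P ∧ ∀ i ∈ τ, l i x = c i}

section
variable {d : ℕ} {ι : Type} {P : Set (Fin d → ℝ)} {W : Submodule ℝ (Fin d → ℝ)}
    {I : Finset ι} {l : ι → (Fin d → ℝ) →ₗ[ℝ] ℝ} {c : ι → ℝ}

theorem HRep.move (h : HRep P W I l c) {x u : Fin d → ℝ} (hx : x ∈ P) (hu : u ∈ W)
    (ha : ∀ i ∈ I, l i x = c i → l i u ≤ 0) :
    ∃ ε : ℝ, 0 < ε ∧ x + ε • u ∈ P ∧ ∀ i ∈ I, l i x < c i → l i (x + ε • u) < c i := by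
  have h1 : ∀ᶠ ε in nhdsWithin (0:ℝ) (Set.Ioi 0), ∀ i ∈ I,
      l i x < c i → l i (x + ε • u) < c i := by
    rw [Filter.eventually_all_finset]
    intro i _
    by_cases hlt : l i x < c i
    · have hc : Continuous (fun ε : ℝ => l i x + ε * l i u) := by fun_prop
      have ht : Filter.Tendsto (fun ε : ℝ => l i x + ε * l i u) (nhdsWithin 0 (Set.Ioi 0))
          (nhds (l i x)) := by
        have := (hc.tendsto 0).mono_left (nhdsWithin_le_nhds (s := Set.Ioi (0:ℝ)))
        simpa using this
      filter_upwards [ht.eventually (gt_mem_nhds hlt)] with ε hε _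
      simpa using hε
    · exact Filter.Eventually.of_forall fun _ h => absurd h hlt
  obtain ⟨ε, hε, hpos⟩ := (h1.and self_mem_nhdsWithin).exists
  have hpos : 0 < ε := hpos
  refine ⟨ε, hpos, h.mem x hx _ (W.smul_mem _ hu) ?_, hε⟩
  intro i hi
  rcases (h.le x hx i hi).lt_or_eq with hlt | heq
  · exact (hε i hi hlt).le
  · have := ha i hi heq
    simp only [map_add, map_smul, smul_eq_mul]
    nlinarith

theorem HRep.convex (h : HRep P W I l c) : Convex ℝ P := by
  intro x hx y hy a b ha hb hab
  have hxy := h.dir x hx y hy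
  have : a • x + b • y = x + b • (y - x) := by
    have : a = 1 - b := by linarith
    subst this
    module
  rw [this]
  refine h.mem x hx _ (W.smul_mem _ hxy) fun i hi => ?_
  have h1 := h.le x hx i hi
  have h2 := h.le y hy i hi
  simp only [map_add, map_smul, map_sub, smul_eq_mul]
  have : a = 1 - b := by linarith
  nlinarith

theorem Rep.generic (h : Rep P W I l c) {τ : Finset ι} (hI : τ ⊆ I) {x : Fin d → ℝ}
    (hx : x ∈ Fc P l c τ) : ∃ y ∈ Fc P l c τ, ∀ i ∈ I, i ∉ τ → l i y < c i := by
  classical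
  obtain ⟨hxP, hxτ⟩ := hx
  obtain ⟨u, hu, hui⟩ := h.indep x hxP (fun i => if i ∈ τ then 0 else -1)
  obtain ⟨ε, hε, hmem, hlt⟩ := h.toHRep.move hxP hu (fun i hi hia => by
    rw [hui i hi hia]; split_ifs <;> norm_num)
  refine ⟨_, ⟨hmem, fun i hi => ?_⟩, fun i hi hiτ => ?_⟩
  · have := hui i (hI hi) (hxτ i hi)
    simp [hi] at this
    simp [this, hxτ i hi]
  · rcases (h.le x hxP i hi).lt_or_eq with h1 | h1
    · exact hlt i hi h1
    · have := hui i hi h1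
      simp [hiτ] at this
      simp [this, h1, hε]

theorem HRep.fc_face (h : HRep P W I l c) {τ : Finset ι} (hτ : τ ⊆ I)
    (hne : (Fc P l c τ).Nonempty) : IsFaceOf (Fc P l c τ) P := by
  refine ⟨hne, fun _ => ?_⟩
  obtain ⟨x0, hx0, hx0τ⟩ := hne
  refine ⟨LinearMap.toContinuousLinearMap (∑ i ∈ τ, l i), ?_⟩
  ext x
  simp only [Fc, Set.mem_ofPred_eq, LinearMap.coe_toContinuousLinearMap',
    LinearMap.coe_sum, Finset.sum_apply]
  refine and_congr_right fun hx => ⟨fun hxt y hy => ?_, fun hmax => ?_⟩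
  · exact Finset.sum_le_sum fun i hi => by rw [hxt i hi]; exact h.le y hy i (hτ hi)
  · have h1 := hmax x0 hx0
    have h2 : ∀ i ∈ τ, l i x ≤ l i x0 := fun i hi => by
      rw [hx0τ i hi]; exact h.le x hx i (hτ hi)
    have h3 := (Finset.sum_eq_sum_iff_of_le h2).1 (le_antisymm (Finset.sum_le_sum h2) h1)
    intro i hi
    rw [h3 i hi, hx0τ i hi]

theorem HRep.face_eq (h : HRep P W I l c) {F : Set (Fin d → ℝ)} (hF : IsFaceOf F P) :
    ∃ τ ⊆ I, F = Fc P l c τ := by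
  classical
  obtain ⟨hne, hexp⟩ := hF
  obtain ⟨f, hf⟩ := hexp hne
  let act : (Fin d → ℝ) → Finset ι := fun x => I.filter (fun i => l i x = c i)
  have hmin : ∃ p ∈ F, ∀ q ∈ F, (act p).card ≤ (act q).card := by
    obtain ⟨p, hp, hpm⟩ := WellFounded.has_min (measure fun x => (act x).card).wf F hne
    exact ⟨p, hp, fun q hq => not_lt.1 (hpm q hq)⟩
  obtain ⟨p, hp, hpm⟩ := hmin
  have hpF := hp
  rw [hf] at hpF
  obtain ⟨hpP, hpmax⟩ := hpF
  have hFP : F ⊆ P := by rw [hf]; exact fun x hx => hx.1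
  refine ⟨act p, Finset.filter_subset _ _, ?_⟩
  ext y
  constructor
  · intro hy
    refine ⟨hFP hy, ?_⟩
    -- the midpoint
    let m : Fin d → ℝ := (1/2 : ℝ) • p + (1/2 : ℝ) • y
    have hmP : m ∈ P := h.convex hpP (hFP hy) (by norm_num) (by norm_num) (by norm_num)
    have hyF := hy
    rw [hf] at hyF
    have hmF : m ∈ F := by
      rw [hf]
      refine ⟨hmP, fun z hz => ?_⟩
      have h1 := hpmax z hz
      have h2 := hyF.2 z hz
      simp only [m, map_add, map_smul, smul_eq_mul]
      linarith
    have hsub : act m ⊆ act p ∩ act y := by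
      intro i hi
      simp only [act, Finset.mem_inter, Finset.mem_filter] at hi ⊢
      obtain ⟨hi, him⟩ := hi
      have h1 := h.le p hpP i hi
      have h2 := h.le y (hFP hy) i hi
      simp only [m, map_add, map_smul, smul_eq_mul] at him
      refine ⟨⟨hi, by linarith⟩, ⟨hi, by linarith⟩⟩
    have h3 : act p ∩ act y = act p := Finset.eq_of_subset_of_card_le Finset.inter_subset_left
      ((hpm m hmF).trans (Finset.card_le_card hsub))
    intro i hi
    rw [← h3] at hi
    simp only [act, Finset.mem_inter, Finset.mem_filter] at hi
    exact hi.2.2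
  · rintro ⟨hyP, hya⟩
    obtain ⟨ε, hε, hmem, -⟩ := h.move hpP (h.dir y hyP p hpP) (fun i hi hia => by
      have := hya i (by simp [act, hi, hia])
      simp [this, hia])
    have h1 := hpmax _ hmem
    simp only [map_add, map_smul, map_sub, smul_eq_mul] at h1
    have h2 : f p ≤ f y := by
      have : ε * (f p - f y) ≤ 0 := by linarith
      by_contra hc
      nlinarith [mul_pos hε (sub_pos.2 (not_le.1 hc))]
    rw [hf]
    exact ⟨hyP, fun z hz => (hpmax z hz).trans h2⟩

theorem Rep.fc_subset_iff (h : Rep P W I l c) {τ σ : Finset ι} (hτ : τ ⊆ I) (hσ : σ ⊆ I)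
    (hne : (Fc P l c τ).Nonempty) : Fc P l c τ ⊆ Fc P l c σ ↔ σ ⊆ τ := by
  constructor
  · intro hs i hi
    by_contra hiτ
    obtain ⟨x, hx⟩ := hne
    obtain ⟨y, hy, hyl⟩ := h.generic hτ hx
    exact (hyl i (hσ hi) hiτ).ne ((hs hy).2 i hi)
  · exact fun hs x hx => ⟨hx.1, fun i hi => hx.2 i (hs hi)⟩

theorem Rep.orderIso (h : Rep P W I l c) (p : Finset ι → Prop)
    (hp : ∀ τ, p τ ↔ τ ⊆ I ∧ (Fc P l c τ).Nonempty) :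
    Nonempty ({τ : Finset ι // p τ}ᵒᵈ ≃o {F : Set (Fin d → ℝ) // IsFaceOf F P}) := by
  let f : {τ : Finset ι // p τ}ᵒᵈ → {F : Set (Fin d → ℝ) // IsFaceOf F P} := fun τ =>
    ⟨Fc P l c (OrderDual.ofDual τ).1, h.toHRep.fc_face ((hp _).1 (OrderDual.ofDual τ).2).1
      ((hp _).1 (OrderDual.ofDual τ).2).2⟩
  have hle : ∀ a b, f a ≤ f b ↔ a ≤ b := by
    intro a b
    have h1 := (hp _).1 (OrderDual.ofDual a).2
    have h2 := (hp _).1 (OrderDual.ofDual b).2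
    exact h.fc_subset_iff h1.1 h2.1 h1.2
  have hsurj : Function.Surjective f := by
    rintro ⟨F, hF⟩
    obtain ⟨τ, hτ, hFτ⟩ := h.toHRep.face_eq hF
    refine ⟨OrderDual.toDual ⟨τ, (hp τ).2 ⟨hτ, hFτ ▸ hF.1⟩⟩, ?_⟩
    exact Subtype.ext hFτ.symm
  exact ⟨RelIso.ofSurjective (OrderEmbedding.ofMapLEIff f hle) hsurj⟩

theorem Rep.combEquiv (h : Rep P W I l c) {d' : ℕ} {P' : Set (Fin d' → ℝ)}
    {W' : Submodule ℝ (Fin d' → ℝ)} {l' : ι → (Fin d' → ℝ) →ₗ[ℝ] ℝ} {c' : ι → ℝ}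
    (h' : Rep P' W' I l' c')
    (hK : ∀ τ ⊆ I, (Fc P l c τ).Nonempty ↔ (Fc P' l' c' τ).Nonempty) : CombEquiv P P' := by
  obtain ⟨e⟩ := h.orderIso (fun τ => τ ⊆ I ∧ (Fc P l c τ).Nonempty) (fun _ => Iff.rfl)
  obtain ⟨e'⟩ := h'.orderIso (fun τ => τ ⊆ I ∧ (Fc P l c τ).Nonempty)
    (fun τ => and_congr_right (hK τ))
  exact ⟨e.symm.trans e'⟩

theorem Rep.vectorSpan_fc (h : Rep P W I l c) {τ : Finset ι} (hτ : τ ⊆ I)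
    (hne : (Fc P l c τ).Nonempty) (u : Fin d → ℝ) :
    u ∈ (affineSpan ℝ (Fc P l c τ)).direction ↔ u ∈ W ∧ ∀ i ∈ τ, l i u = 0 := by
  rw [direction_affineSpan]
  constructor
  · intro hu
    let S : Submodule ℝ (Fin d → ℝ) :=
      { carrier := {u | u ∈ W ∧ ∀ i ∈ τ, l i u = 0}
        add_mem' := fun {a b} ha hb => ⟨W.add_mem ha.1 hb.1, fun i hi => by
          rw [map_add, ha.2 i hi, hb.2 i hi, add_zero]⟩
        zero_mem' := ⟨W.zero_mem, fun i _ => map_zero _⟩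
        smul_mem' := fun r a ha => ⟨W.smul_mem r ha.1, fun i hi => by
          rw [map_smul, ha.2 i hi, smul_zero]⟩ }
    have : vectorSpan ℝ (Fc P l c τ) ≤ S := by
      rw [vectorSpan, Submodule.span_le]
      rintro _ ⟨x, hx, y, hy, rfl⟩
      refine ⟨h.dir y hy.1 x hx.1, fun i hi => ?_⟩
      simp [hx.2 i hi, hy.2 i hi]
    exact this hu
  · rintro ⟨huW, hul⟩
    obtain ⟨x, hx⟩ := hne
    obtain ⟨y, hy, hyl⟩ := h.generic hτ hx
    obtain ⟨ε, hε, hmem, -⟩ := h.toHRep.move hy.1 huW (fun i hi hia => by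
      by_cases hiτ : i ∈ τ
      · exact (hul i hiτ).le
      · exact absurd hia (hyl i hi hiτ).ne)
    have hz : y + ε • u ∈ Fc P l c τ := ⟨hmem, fun i hi => by simp [hul i hi, hy.2 i hi]⟩
    have h1 := vsub_mem_vectorSpan ℝ hz hy
    have h2 : u = ε⁻¹ • ((y + ε • u) -ᵥ y) := by
      simp [smul_smul, inv_mul_cancel₀ hε.ne']
    rw [h2]
    exact Submodule.smul_mem _ _ h1

theorem Rep.polyDim_top (h : Rep P ⊤ I l c) (hne : P.Nonempty) : polyDim P = d := by
  have hF : Fc P l c ∅ = P := by ext; simp [Fc]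
  have : (affineSpan ℝ P).direction = ⊤ := by
    rw [eq_top_iff]
    intro u _
    have := (h.vectorSpan_fc (τ := ∅) (by simp) (by rwa [hF]) u).2 (by simp)
    rwa [hF] at this
  rw [polyDim, this]
  simp

theorem Rep.polyDim_two [DecidableEq ι] (h : Rep P ⊤ I l c) {i j : ι} (hi : i ∈ I) (hj : j ∈ I)
    (hij : i ≠ j) (hne : (Fc P l c {i, j}).Nonempty) :
    polyDim (Fc P l c {i, j}) + 2 = d := by
  have hdir : (affineSpan ℝ (Fc P l c {i, j})).direction = LinearMap.ker ((l i).prod (l j)) := by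
    ext u
    rw [h.vectorSpan_fc (by intro k; simp; rintro (rfl | rfl) <;> assumption) hne]
    simp
  obtain ⟨x, hx⟩ := hne
  have hsurj : Function.Surjective ((l i).prod (l j)) := by
    rintro ⟨a, b⟩
    obtain ⟨u, -, hu⟩ := h.indep x hx.1 (fun k => if k = i then a else b)
    refine ⟨u, ?_⟩
    have h1 := hu i hi (hx.2 i (by simp))
    have h2 := hu j hj (hx.2 j (by simp))
    simp [hij.symm] at h1 h2
    simp [h1, h2]
  have := LinearMap.finrank_range_add_finrank_ker ((l i).prod (l j))
  rw [LinearMap.range_eq_top.2 hsurj] at this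
  simp at this
  rw [polyDim, hdir]
  omega

end


theorem Rep.shave {n : ℕ} {ι : Type} [DecidableEq ι] {Q : Set (Fin n → ℝ)}
    {I : Finset ι} {l : ι → (Fin n → ℝ) →ₗ[ℝ] ℝ} {c : ι → ℝ}
    (h : Rep Q ⊤ I l c) (hQ : IsCompact Q) {i j w : ι} (hi : i ∈ I) (hj : j ∈ I) (hij : i ≠ j)
    (hw : w ∉ I) (hlw : l w = l i + l j) (hne : (Fc Q l c {i, j}).Nonempty) :
    ∃ (Q' : Set (Fin n → ℝ)) (c' : ι → ℝ), ObtainedByShaving Q Q' ∧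
      Rep Q' ⊤ (insert w I) l c' ∧ IsCompact Q' ∧
      (∀ τ ⊆ I, (Fc Q' l c' τ).Nonempty ↔ (Fc Q l c τ).Nonempty ∧ ¬ (i ∈ τ ∧ j ∈ τ)) ∧
      (∀ τ ⊆ I, (Fc Q' l c' (insert w τ)).Nonempty ↔
        ¬ (i ∈ τ ∧ j ∈ τ) ∧ (Fc Q l c (insert i (insert j τ))).Nonempty) := by
  have hcont : ∀ k, Continuous (l k) := fun k => LinearMap.continuous_of_finiteDimensional _
  have hev : ∀ᶠ e in nhdsWithin (0:ℝ) (Set.Ioi 0), ∀ τ ∈ I.powerset,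
      ((Fc Q l c τ).Nonempty → ¬ (i ∈ τ ∧ j ∈ τ) →
        ∃ x ∈ Fc Q l c τ, l i x + l j x < c i + c j - e) ∧
      (¬ (Fc Q l c (insert i (insert j τ))).Nonempty →
        ∀ x ∈ Fc Q l c τ, l i x + l j x < c i + c j - e) := by
    rw [Filter.eventually_all_finset]
    intro τ hτ
    rw [Finset.mem_powerset] at hτ
    have key : ∀ v : ℝ, v < c i + c j → ∀ᶠ e in nhdsWithin (0:ℝ) (Set.Ioi 0),
        v < c i + c j - e := by
      intro v hv
      have : ∀ᶠ e in nhdsWithin (0:ℝ) (Set.Ioi 0), e < c i + c j - v :=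
        nhdsWithin_le_nhds (gt_mem_nhds (by linarith))
      filter_upwards [this] with e he
      linarith
    apply Filter.Eventually.and
    · by_cases hne : (Fc Q l c τ).Nonempty
      swap
      · exact Filter.Eventually.of_forall fun e h1 => absurd h1 hne
      by_cases hn : i ∈ τ ∧ j ∈ τ
      · exact Filter.Eventually.of_forall fun e _ h1 => absurd hn h1
      obtain ⟨x, hx⟩ := hne
      obtain ⟨y, hy, hyl⟩ := h.generic hτ hx
      have hlt : l i y + l j y < c i + c j := by
        have h1 := h.le y hy.1 i hi
        have h2 := h.le y hy.1 j hj
        by_cases hiτ : i ∈ τ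
        · have := hyl j hj (fun hjτ => hn ⟨hiτ, hjτ⟩)
          linarith
        · have := hyl i hi hiτ
          linarith
      filter_upwards [key _ hlt] with e he _ _
      exact ⟨y, hy, he⟩
    · by_cases hne : (Fc Q l c (insert i (insert j τ))).Nonempty
      · exact Filter.Eventually.of_forall fun e h1 => absurd hne h1
      by_cases hne2 : (Fc Q l c τ).Nonempty
      swap
      · exact Filter.Eventually.of_forall fun e _ x hx => absurd ⟨x, hx⟩ hne2
      have hcl : IsCompact (Fc Q l c τ) := by
        have : Fc Q l c τ = Q ∩ ⋂ k ∈ τ, {x | l k x = c k} := by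
          ext x; simp [Fc]
        rw [this]
        exact hQ.inter_right (isClosed_biInter fun k _ =>
          isClosed_eq (hcont k) continuous_const)
      obtain ⟨y, hy, hym⟩ := hcl.exists_isMaxOn hne2
        (((hcont i).add (hcont j)).continuousOn)
      have hlt : l i y + l j y < c i + c j := by
        have h1 := h.le y hy.1 i hi
        have h2 := h.le y hy.1 j hj
        by_contra hcon
        apply hne
        refine ⟨y, hy.1, ?_⟩
        intro k hk
        simp only [Finset.mem_insert] at hk
        rcases hk with rfl | rfl | hk
        · linarith
        · linarith
        · exact hy.2 k hk
      filter_upwards [key _ hlt] with e he _ x hx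
      exact lt_of_le_of_lt (hym hx) he
  obtain ⟨e, he, hpos⟩ := (hev.and self_mem_nhdsWithin).exists
  have hpos : 0 < e := hpos
  simp only [Finset.mem_powerset] at he
  have hcw : ∀ k ∈ I, Function.update c w (c i + c j - e) k = c k := fun k hk =>
    Function.update_of_ne (by rintro rfl; exact hw hk) _ _
  set c' := Function.update c w (c i + c j - e) with hc'
  have hcw' : c' w = c i + c j - e := Function.update_self _ _ _
  have hHc : IsClosed {x | l w x ≤ c' w} := isClosed_le (hcont w) continuous_const
  have hlwx : ∀ x, l w x = l i x + l j x := fun x => by rw [hlw]; rfl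
  have hsub : ({i, j} : Finset ι) ⊆ I := by
    intro k; simp; rintro (rfl | rfl) <;> assumption
  have hFc : ∀ τ ⊆ I, ∀ x, x ∈ Fc (Q ∩ {x | l w x ≤ c' w}) l c' τ ↔
      x ∈ Fc Q l c τ ∧ l i x + l j x ≤ c i + c j - e := by
    intro τ hτ x
    simp only [Fc, Set.mem_inter_iff, Set.mem_ofPred_eq, hcw', hlwx]
    constructor
    · rintro ⟨⟨h1, h2⟩, h3⟩
      exact ⟨⟨h1, fun k hk => (h3 k hk).trans (hcw k (hτ hk))⟩, h2⟩
    · rintro ⟨⟨h1, h2⟩, h3⟩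
      exact ⟨⟨h1, h3⟩, fun k hk => (h2 k hk).trans (hcw k (hτ hk)).symm⟩
  have hFcw : ∀ τ ⊆ I, ∀ x, x ∈ Fc (Q ∩ {x | l w x ≤ c' w}) l c' (insert w τ) ↔
      x ∈ Fc Q l c τ ∧ l i x + l j x = c i + c j - e := by
    intro τ hτ x
    simp only [Fc, Set.mem_inter_iff, Set.mem_ofPred_eq, hcw', hlwx, Finset.forall_mem_insert]
    constructor
    · rintro ⟨⟨h1, h2⟩, h4, h3⟩
      exact ⟨⟨h1, fun k hk => (h3 k hk).trans (hcw k (hτ hk))⟩, h4⟩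
    · rintro ⟨⟨h1, h2⟩, h3⟩
      exact ⟨⟨h1, h3.le⟩, h3, fun k hk => (h2 k hk).trans (hcw k (hτ hk)).symm⟩
  refine ⟨Q ∩ {x | l w x ≤ c' w}, c', ?_, ?_, hQ.inter_right hHc, ?_, ?_⟩
  · refine ⟨Fc Q l c {i, j}, {x | l w x ≤ c' w}, h.toHRep.fc_face hsub hne, ?_,
      ⟨l w, c' w, ?_, rfl⟩, ?_, ?_, rfl⟩
    · rw [h.polyDim_two hi hj hij hne, h.polyDim_top]
      exact hne.mono fun x hx => hx.1
    · intro h0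
      obtain ⟨x, hx⟩ := hne
      obtain ⟨u, -, hu⟩ := h.indep x hx.1 (fun _ => 1)
      have h1 := hu i hi (hx.2 i (by simp))
      have h2 := hu j hj (hx.2 j (by simp))
      have h3 := hlwx u
      rw [h0, h1, h2] at h3
      norm_num at h3
    · ext x
      simp only [Set.mem_inter_iff, Set.mem_ofPred_eq, Set.mem_empty_iff_false, iff_false, not_and,
        not_le]
      intro hx
      rw [hlwx, hcw', hx.2 i (by simp), hx.2 j (by simp)]
      linarith
    · intro v hv hvG
      obtain ⟨τ, hτ, hvτ⟩ := h.toHRep.face_eq hv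
      have hvm : v ∈ Fc Q l c τ := hvτ ▸ Set.mem_singleton v
      have hn : ¬ (i ∈ τ ∧ j ∈ τ) := by
        rintro ⟨h1, h2⟩
        apply hvG
        refine ⟨hvm.1, fun k hk => ?_⟩
        simp only [Finset.mem_insert, Finset.mem_singleton] at hk
        rcases hk with rfl | rfl
        · exact hvm.2 _ h1
        · exact hvm.2 _ h2
      obtain ⟨x, hx, hxl⟩ := (he τ hτ).1 ⟨v, hvm⟩ hn
      rw [← hvτ] at hx
      obtain rfl : x = v := hx
      rw [mem_interior]
      refine ⟨{x | l w x < c' w}, fun y hy => by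
        rw [Set.mem_ofPred_eq] at hy ⊢; exact hy.le,
        isOpen_lt (hcont w) continuous_const, ?_⟩
      rw [Set.mem_ofPred_eq, hlwx, hcw']; exact hxl
  · refine ⟨⟨?_, fun _ _ _ _ => Submodule.mem_top, ?_⟩, ?_⟩
    · rintro x ⟨hx, hxw⟩ k hk
      rcases Finset.mem_insert.1 hk with rfl | hk
      · exact hxw
      · rw [hcw k hk]; exact h.le x hx k hk
    · rintro x ⟨hx, hxw⟩ u hu hle
      exact ⟨h.mem x hx u hu fun k hk => by
        have := hle k (Finset.mem_insert_of_mem hk)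
        rwa [hcw k hk] at this, hle w (Finset.mem_insert_self _ _)⟩
    · rintro x ⟨hx, hxw⟩ t
      by_cases hact : l w x = c' w
      swap
      · obtain ⟨u, hu, hut⟩ := h.indep x hx t
        refine ⟨u, hu, fun k hk hka => ?_⟩
        rcases Finset.mem_insert.1 hk with rfl | hk
        · exact absurd hka hact
        · exact hut k hk (by rw [hka, hcw k hk])
      let τ := I.filter (fun k => l k x = c k)
      have hτ : τ ⊆ I := Finset.filter_subset _ _
      have hxτ : x ∈ Fc Q l c τ := ⟨hx, fun k hk => (Finset.mem_filter.1 hk).2⟩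
      rw [hlwx, hcw'] at hact
      have hn : ¬ (i ∈ τ ∧ j ∈ τ) := by
        rintro ⟨h1, h2⟩
        have := hxτ.2 i h1
        have := hxτ.2 j h2
        linarith
      obtain ⟨z, hz⟩ : (Fc Q l c (insert i (insert j τ))).Nonempty := by
        by_contra hcon
        have := (he τ hτ).2 hcon x hxτ
        linarith
      have hzi := hz.2 i (by simp)
      have hzj := hz.2 j (by simp)
      by_cases hiτ : i ∈ τ
      · have hjτ : j ∉ τ := fun hjτ => hn ⟨hiτ, hjτ⟩
        obtain ⟨u, hu, hut⟩ := h.indep z hz.1 (Function.update t j (t w - t i))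
        refine ⟨u, hu, fun k hk hka => ?_⟩
        have h1 := hut i hi hzi
        have h2 := hut j hj hzj
        rw [Function.update_of_ne hij] at h1
        rw [Function.update_self] at h2
        rcases Finset.mem_insert.1 hk with rfl | hk
        · rw [hlwx, h1, h2]; ring
        · have hkτ : k ∈ τ := Finset.mem_filter.2 ⟨hk, by rw [hka, hcw k hk]⟩
          have := hut k hk (hz.2 k (by simp [hkτ]))
          rwa [Function.update_of_ne (by rintro rfl; exact hjτ hkτ)] at this
      · obtain ⟨u, hu, hut⟩ := h.indep z hz.1 (Function.update t i (t w - t j))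
        refine ⟨u, hu, fun k hk hka => ?_⟩
        have h1 := hut i hi hzi
        have h2 := hut j hj hzj
        rw [Function.update_of_ne hij.symm] at h2
        rw [Function.update_self] at h1
        rcases Finset.mem_insert.1 hk with rfl | hk
        · rw [hlwx, h1, h2]; ring
        · have hkτ : k ∈ τ := Finset.mem_filter.2 ⟨hk, by rw [hka, hcw k hk]⟩
          have := hut k hk (hz.2 k (by simp [hkτ]))
          rwa [Function.update_of_ne (by rintro rfl; exact hiτ hkτ)] at this
  · intro τ hτ
    constructor
    · rintro ⟨x, hx⟩
      rw [hFc τ hτ] at hx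
      refine ⟨⟨x, hx.1⟩, ?_⟩
      rintro ⟨h1, h2⟩
      have := hx.1.2 i h1
      have := hx.1.2 j h2
      linarith
    · rintro ⟨h1, h2⟩
      obtain ⟨x, hx, hxl⟩ := (he τ hτ).1 h1 h2
      exact ⟨x, (hFc τ hτ x).2 ⟨hx, hxl.le⟩⟩
  · intro τ hτ
    constructor
    · rintro ⟨x, hx⟩
      rw [hFcw τ hτ] at hx
      refine ⟨?_, ?_⟩
      · rintro ⟨h1, h2⟩
        have := hx.1.2 i h1
        have := hx.1.2 j h2
        linarith
      · by_contra hcon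
        have := (he τ hτ).2 hcon x hx.1
        linarith
    · rintro ⟨h1, z, hz⟩
      have hzτ : z ∈ Fc Q l c τ := ⟨hz.1, fun k hk => hz.2 k (by simp [hk])⟩
      have hzi := hz.2 i (by simp)
      have hzj := hz.2 j (by simp)
      obtain ⟨x, hx, hxl⟩ := (he τ hτ).1 ⟨z, hzτ⟩ h1
      set g := c i + c j - (l i x + l j x) with hg
      have hgpos : 0 < g := by linarith
      -- the point on the segment from `z` to `x`
      have hs0 : 0 ≤ e / g := by positivity
      have hs1 : e / g ≤ 1 := by rw [div_le_one hgpos]; linarith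
      refine ⟨(1 - e / g) • z + (e / g) • x, (hFcw τ hτ _).2 ⟨⟨?_, ?_⟩, ?_⟩⟩
      · exact h.toHRep.convex hz.1 hx.1 (by linarith) hs0 (by ring)
      · intro k hk
        simp only [map_add, map_smul, smul_eq_mul, hx.2 k hk, hzτ.2 k hk]
        ring
      · simp only [map_add, map_smul, smul_eq_mul, hzi, hzj]
        have : e / g * g = e := div_mul_cancel₀ _ hgpos.ne'
        rw [hg] at this
        linarith



/-- Cyclic distance from `a` to `b`. -/
def dst {n : ℕ} (a b : Fin n) : ℕ := if a.1 ≤ b.1 then b.1 - a.1 else b.1 + n - a.1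

/-- Arcs of the cyclic order of length at least two. -/
abbrev Arc (n : ℕ) := {p : Fin n × Fin n // 2 ≤ dst p.1 p.2}

/-- Length of an arc. -/
def Arc.len {n : ℕ} (w : Arc n) : ℕ := dst w.1.1 w.1.2

/-- `c` is not strictly inside the arc `w`. -/
def Arc.out {n : ℕ} (w : Arc n) (c : Fin n) : Prop :=
  ¬ (0 < dst w.1.1 c ∧ dst w.1.1 c < dst w.1.1 w.1.2)

/-- Indices of the facets: red and blue diameters, and pairs (given by arcs). -/
abbrev Idx (n : ℕ) := (Fin n ⊕ Fin n) ⊕ Arc n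

/-- The adjacency after cutting the arcs in `S`. -/
def adj {n : ℕ} (S : Finset (Arc n)) : Idx n → Idx n → Prop
  | .inl (.inl _), .inl (.inl _) => True
  | .inl (.inr _), .inl (.inr _) => True
  | .inl (.inl a), .inl (.inr b) => dst a b ≠ 1 ∧ ∀ w ∈ S, w.1 ≠ (a, b)
  | .inl (.inr b), .inl (.inl a) => dst a b ≠ 1 ∧ ∀ w ∈ S, w.1 ≠ (a, b)
  | .inl (.inl a), .inr w => w.out a
  | .inl (.inr a), .inr w => w.out a
  | .inr w, .inl (.inl a) => w.out a
  | .inr w, .inl (.inr a) => w.out a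
  | .inr w, .inr v => (w.len ≤ v.len ∧ w.out v.1.1 ∧ w.out v.1.2) ∨
      (v.len ≤ w.len ∧ v.out w.1.1 ∧ v.out w.1.2)

theorem dst_self {n : ℕ} (a : Fin n) : dst a a = 0 := by simp [dst]

theorem Arc.out_left {n : ℕ} (w : Arc n) : w.out w.1.1 := by simp [Arc.out, dst_self]

theorem Arc.out_right {n : ℕ} (w : Arc n) : w.out w.1.2 := by simp [Arc.out]

theorem adj_refl {n : ℕ} (S : Finset (Arc n)) (x : Idx n) : adj S x x := by
  rcases x with (a | b) | w
  · trivial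
  · trivial
  · exact Or.inl ⟨le_rfl, w.out_left, w.out_right⟩

theorem adj_symm {n : ℕ} (S : Finset (Arc n)) (x y : Idx n) : adj S x y → adj S y x := by
  rcases x with (a | b) | w <;> rcases y with (a' | b') | w' <;> simp only [adj, imp_self]
  exact Or.symm

theorem dst_ne {n : ℕ} {a b : Fin n} (h : a ≠ b) : 0 < dst a b := by
  have : a.1 ≠ b.1 := fun h' => h (Fin.ext h')
  unfold dst; split_ifs <;> omega

theorem dst_lt {n : ℕ} (a b : Fin n) : dst a b < n := by
  unfold dst; split_ifs <;> omega

theorem dst_eq_zero {n : ℕ} {a b : Fin n} : dst a b = 0 ↔ a = b := by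
  constructor
  · intro h; by_contra hc; have := dst_ne hc; omega
  · rintro rfl; exact dst_self a

/-- the arcs sharing the right end point -/
theorem dst_out_right {n : ℕ} {a b c : Fin n} (h : 2 ≤ dst a b) (hca : c ≠ a) :
    (0 < dst a c ∧ dst a c < dst a b) ↔ (1 ≤ dst c b ∧ dst c b ≤ dst a b) := by
  have : c.1 ≠ a.1 := fun h' => hca (Fin.ext h')
  unfold dst at *; split_ifs at * <;> omega

theorem dst_out_right' {n : ℕ} {a b c : Fin n} (h : 0 < dst a c ∧ dst a c < dst a b) :
    1 ≤ dst c b ∧ dst c b < dst a b := by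
  unfold dst at *; split_ifs at * <;> omega

/-- equal lengths -/
theorem out_eq_len {n : ℕ} (w v : Arc n) (h : w.len = v.len)
    (h1 : w.out v.1.1) (h2 : w.out v.1.2) : v.out w.1.1 ∧ v.out w.1.2 := by
  obtain ⟨⟨a, b⟩, hw⟩ := w
  obtain ⟨⟨c, e⟩, hv⟩ := v
  simp only [Arc.out, Arc.len] at *
  unfold dst at *
  constructor <;> (split_ifs at * <;> omega)

theorem adj_inr_of_le {n : ℕ} (S : Finset (Arc n)) (w v : Arc n) (h : v.len ≤ w.len) :
    adj S (.inr w) (.inr v) ↔ v.out w.1.1 ∧ v.out w.1.2 := by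
  constructor
  · rintro (⟨h1, h2, h3⟩ | h1)
    · exact out_eq_len w v (le_antisymm h1 h) h2 h3
    · exact h1.2
  · intro h1
    exact Or.inr ⟨h, h1⟩

/-- the new vertex is adjacent exactly to the common neighbours -/
theorem adj_new {n : ℕ} (S : Finset (Arc n)) (w : Arc n) (hwS : w ∉ S)
    (hmax : ∀ v ∈ S, v.len ≤ w.len) (hlow : ∀ v : Arc n, v.len < w.len → v ∈ S)
    (x : Idx n) (hx : ∀ v, x = .inr v → v ∈ S) :
    adj S (.inr w) x ↔ (adj S (.inl (.inl w.1.1)) x ∧ adj S (.inl (.inr w.1.2)) x) := by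
  rcases x with (c | c) | v
  · simp only [adj, true_and]
    by_cases hca : c = w.1.1
    · subst hca
      have : w.out w.1.1 := w.out_left
      simp only [this, true_iff]
      refine ⟨by have := w.2; omega, ?_⟩
      rintro v hv hvw
      have : v = w := Subtype.ext hvw
      exact hwS (this ▸ hv)
    rw [Arc.out]
    constructor
    · intro hout
      rw [dst_out_right w.2 hca] at hout
      have := w.2
      refine ⟨by omega, ?_⟩
      intro v hv hvw
      have h1 := hmax v hv
      have h2 := v.2
      simp only [Arc.len, hvw] at h1 h2
      omega
    · rintro ⟨h1, h2⟩ hin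
      obtain ⟨h3, h4⟩ := dst_out_right' hin
      exact h2 ⟨(c, w.1.2), by simp only; omega⟩ (hlow _ h4) rfl
  · simp only [adj, and_true]
    by_cases hca : c = w.1.2
    · subst hca
      have : w.out w.1.2 := w.out_right
      simp only [this, true_iff]
      refine ⟨by have := w.2; omega, ?_⟩
      rintro v hv hvw
      have : v = w := Subtype.ext hvw
      exact hwS (this ▸ hv)
    rw [Arc.out]
    constructor
    · intro hout
      refine ⟨by have := w.2; omega, ?_⟩
      intro v hv hvw
      have h1 := hmax v hv
      have h2 := v.2
      simp only [Arc.len, hvw] at h1 h2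
      have h3 : dst w.1.1 c ≠ dst w.1.1 w.1.2 := by
        intro h
        apply hca
        apply Fin.ext
        unfold dst at h; split_ifs at h <;> omega
      omega
    · rintro ⟨h1, h2⟩ hin
      exact h2 ⟨(w.1.1, c), by simp only; omega⟩ (hlow _ hin.2) rfl
  · rw [adj_inr_of_le S w v (hmax v (hx v rfl))]
    simp only [adj]

/-- old adjacency changes only at the cut edge -/
theorem adj_insert {n : ℕ} [DecidableEq (Arc n)] (S : Finset (Arc n)) (w : Arc n) (x y : Idx n) :
    adj (insert w S) x y ↔ adj S x y ∧
      ¬ (x = .inl (.inl w.1.1) ∧ y = .inl (.inr w.1.2)) ∧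
      ¬ (y = .inl (.inl w.1.1) ∧ x = .inl (.inr w.1.2)) := by
  have : ∀ a b, w.1 = (a, b) ↔ (a = w.1.1 ∧ b = w.1.2) := by
    intro a b
    rw [Prod.ext_iff]
    simp only
    constructor <;> rintro ⟨rfl, rfl⟩ <;> exact ⟨rfl, rfl⟩
  rcases x with (a | b) | v <;> rcases y with (a' | b') | v' <;>
    simp [adj, this]
  · tauto
  · tauto

/-- The functionals. -/
noncomputable def lfun (n : ℕ) [NeZero n] : Idx n → (Fin n → ℝ) →ₗ[ℝ] ℝ
  | .inl (.inl a) => -(LinearMap.proj a : (Fin n → ℝ) →ₗ[ℝ] ℝ)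
  | .inl (.inr b) => (LinearMap.proj (b - 1) : (Fin n → ℝ) →ₗ[ℝ] ℝ)
  | .inr w => -(LinearMap.proj w.1.1 : (Fin n → ℝ) →ₗ[ℝ] ℝ) +
      (LinearMap.proj (w.1.2 - 1) : (Fin n → ℝ) →ₗ[ℝ] ℝ)

theorem dst_one {n : ℕ} [NeZero n] (hn : 2 ≤ n) (a b : Fin n) : dst a b = 1 ↔ b - 1 = a := by
  obtain ⟨m, rfl⟩ : ∃ m, n = m + 2 := ⟨n - 2, by omega⟩
  rw [Fin.ext_iff, Fin.sub_def]
  have h1 : (1 : Fin (m + 2)).1 = 1 := rfl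
  simp only [h1]
  have hb := b.2
  have ha := a.2
  rcases Nat.eq_zero_or_pos b.1 with h | h
  · rw [h, Nat.mod_eq_of_lt (by omega)]
    unfold dst; split_ifs <;> omega
  · rw [show m + 2 - 1 + b.1 = (b.1 - 1) + (m + 2) by omega, Nat.add_mod_right,
      Nat.mod_eq_of_lt (by omega)]
    unfold dst; split_ifs <;> omega

theorem base {n : ℕ} [NeZero n] (hn : 2 ≤ n) :
    ∃ c, Rep (Set.Icc (0 : Fin n → ℝ) 1) ⊤ (Finset.disjSum Finset.univ ∅) (lfun n) c ∧
      ∀ τ ⊆ (Finset.disjSum Finset.univ ∅ : Finset (Idx n)),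
        (Fc (Set.Icc (0 : Fin n → ℝ) 1) (lfun n) c τ).Nonempty ↔
          ∀ x ∈ τ, ∀ y ∈ τ, adj ∅ x y := by
  classical
  have hmemI : ∀ x u : Fin n → ℝ, (∀ i ∈ (Finset.disjSum Finset.univ ∅ : Finset (Idx n)),
      lfun n i (x + u) ≤ Sum.elim (Sum.elim (fun _ => 0) (fun _ => 1)) (fun _ => 0) i) →
      x + u ∈ Set.Icc (0 : Fin n → ℝ) 1 := by
    intro x u h
    constructor
    · intro a
      have := h (.inl (.inl a)) (by simp)
      simp only [lfun, LinearMap.neg_apply, LinearMap.proj_apply, Sum.elim_inl] at this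
      simp only [Pi.zero_apply]
      linarith
    · intro a
      have := h (.inl (.inr (a + 1))) (by simp)
      simpa [lfun] using this
  refine ⟨Sum.elim (Sum.elim (fun _ => 0) (fun _ => 1)) (fun _ => 0), ⟨⟨?_, ?_, ?_⟩, ?_⟩, ?_⟩
  · rintro x ⟨hx0, hx1⟩ ((a | b) | w) hi
    · simpa [lfun] using hx0 a
    · simpa [lfun] using hx1 (b - 1)
    · simp at hi
  · intros; trivial
  · intro x _ u _
    exact hmemI x u
  · rintro x ⟨hx0, hx1⟩ t
    refine ⟨fun a => if x a = 0 then -t (.inl (.inl a)) else t (.inl (.inr (a + 1))), trivial, ?_⟩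
    rintro ((a | b) | w) hi hia
    · simp [lfun] at hia
      simp [lfun, hia]
    · simp [lfun] at hia
      simp [lfun, hia]
    · simp at hi
  · intro τ hτ
    constructor
    · rintro ⟨p, hp, hpτ⟩
      have key : ∀ a b : Fin n, (.inl (.inl a)) ∈ τ → (.inl (.inr b)) ∈ τ → dst a b ≠ 1 := by
        intro a b ha hb h1
        rw [dst_one hn] at h1
        have h2 := hpτ _ ha
        have h3 := hpτ _ hb
        simp [lfun, h1] at h2 h3
        rw [h2] at h3
        norm_num at h3
      rintro ((a | b) | w) hx ((a' | b') | w') hy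
      · trivial
      · exact ⟨key _ _ hx hy, by simp⟩
      · simpa using hτ hy
      · exact ⟨key _ _ hy hx, by simp⟩
      · trivial
      · simpa using hτ hy
      all_goals simpa using hτ hx
    · intro h
      refine ⟨fun a => if (.inl (.inr (a + 1))) ∈ τ then 1 else 0, ⟨?_, ?_⟩, ?_⟩
      · intro a; simp only [Pi.zero_apply]; split_ifs <;> norm_num
      · intro a; simp only [Pi.one_apply]; split_ifs <;> norm_num
      · rintro ((a | b) | w) hi
        · simp only [lfun, LinearMap.neg_apply, LinearMap.proj_apply, Sum.elim_inl]
          rw [if_neg]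
          · simp
          · intro h1
            have h2 := (h _ hi _ h1).1
            apply h2
            rw [dst_one hn]
            simp
        · simp [lfun, hi]
        · have := hτ hi
          simp at this

theorem chain {n : ℕ} [NeZero n] (hn : 2 ≤ n) (S : Finset (Arc n))
    (hlow : ∀ w ∈ S, ∀ v : Arc n, v.len < w.len → v ∈ S) :
    ∃ Q c, Relation.ReflTransGen ObtainedByShaving (Set.Icc (0 : Fin n → ℝ) 1) Q ∧
      Rep Q ⊤ (Finset.disjSum Finset.univ S) (lfun n) c ∧ IsCompact Q ∧
      ∀ τ ⊆ (Finset.disjSum Finset.univ S : Finset (Idx n)),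
        (Fc Q (lfun n) c τ).Nonempty ↔ ∀ x ∈ τ, ∀ y ∈ τ, adj S x y := by
  classical
  induction S using Finset.induction_on_max_value (Arc.len) with
  | empty =>
    obtain ⟨c, h1, h2⟩ := base hn
    exact ⟨_, c, Relation.ReflTransGen.refl, h1, isCompact_Icc, h2⟩
  | insert w S hwS hmax ih =>
    obtain ⟨Q, c, hQ, hR, hc, hK⟩ := ih (by
      intro v hv u hu
      have h1 := hlow v (Finset.mem_insert_of_mem hv) u hu
      rcases Finset.mem_insert.1 h1 with rfl | h1
      · have := hmax v hv; omega
      · exact h1)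
    have hlow' : ∀ v : Arc n, v.len < w.len → v ∈ S := by
      intro v hv
      rcases Finset.mem_insert.1 (hlow w (Finset.mem_insert_self _ _) v hv) with rfl | h1
      · omega
      · exact h1
    set I : Finset (Idx n) := Finset.disjSum Finset.univ S with hI
    have hi : (.inl (.inl w.1.1) : Idx n) ∈ I := by simp [hI]
    have hj : (.inl (.inr w.1.2) : Idx n) ∈ I := by simp [hI]
    have hw : (.inr w : Idx n) ∉ I := by simp [hI, hwS]
    have hadjw := adj_new S w hwS hmax hlow'
    have hij : adj S (.inl (.inl w.1.1)) (.inl (.inr w.1.2)) := by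
      refine ⟨by have := w.2; omega, ?_⟩
      intro v hv hvw
      exact hwS ((Subtype.ext hvw : v = w) ▸ hv)
    obtain ⟨Q', c', hs, hR', hc', hK1, hK2⟩ := hR.shave hc hi hj (by simp) hw rfl (by
      rw [hK _ (by intro k; simp; rintro (rfl | rfl) <;> assumption)]
      intro x hx y hy
      simp only [Finset.mem_insert, Finset.mem_singleton] at hx hy
      rcases hx with rfl | rfl <;> rcases hy with rfl | rfl
      · exact adj_refl _ _
      · exact hij
      · exact adj_symm _ _ _ hij
      · exact adj_refl _ _)
    have hII : Finset.disjSum Finset.univ (insert w S) = insert (.inr w) I := by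
      ext x; rcases x with (a | b) | v <;> simp [hI]
    refine ⟨Q', c', hQ.tail hs, hII ▸ hR', hc', ?_⟩
    intro τ hτ
    rw [hII] at hτ
    -- cliques not containing the new vertex
    have hold : ∀ σ : Finset (Idx n),
        (∀ x ∈ σ, ∀ y ∈ σ, adj (insert w S) x y) ↔ (∀ x ∈ σ, ∀ y ∈ σ, adj S x y) ∧
          ¬ (.inl (.inl w.1.1) ∈ σ ∧ .inl (.inr w.1.2) ∈ σ) := by
      intro σ
      simp only [adj_insert]
      constructor
      · intro h
        exact ⟨fun x hx y hy => (h x hx y hy).1, fun h1 => (h _ h1.1 _ h1.2).2.1 ⟨rfl, rfl⟩⟩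
      · rintro ⟨h1, h2⟩ x hx y hy
        refine ⟨h1 x hx y hy, ?_, ?_⟩
        · rintro ⟨rfl, rfl⟩; exact h2 ⟨hx, hy⟩
        · rintro ⟨rfl, rfl⟩; exact h2 ⟨hy, hx⟩
    by_cases hwτ : (.inr w) ∈ τ
    · obtain ⟨σ, hσ, rfl⟩ : ∃ σ ⊆ I, τ = insert (.inr w) σ := by
        refine ⟨τ.erase (.inr w), ?_, (Finset.insert_erase hwτ).symm⟩
        intro x hx
        rw [Finset.mem_erase] at hx
        exact (Finset.mem_insert.1 (hτ hx.2)).resolve_left hx.1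
      have hxS : ∀ x ∈ σ, ∀ v, x = .inr v → v ∈ S := by
        rintro x hx v rfl
        have := hσ hx
        simpa [hI] using this
      rw [hK2 σ hσ, hK _ (by
        intro x hx; simp only [Finset.mem_insert] at hx
        rcases hx with rfl | rfl | hx
        · exact hi
        · exact hj
        · exact hσ hx), hold]
      constructor
      · rintro ⟨h1, h2⟩
        have hn : ∀ x ∈ σ, adj S (.inr w) x := fun x hx =>
          (hadjw x (hxS x hx)).2 ⟨h2 _ (by simp) _ (by simp [hx]), h2 _ (by simp) _ (by simp [hx])⟩
        refine ⟨?_, by simpa using h1⟩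
        intro x hx y hy
        rcases Finset.mem_insert.1 hx with rfl | hx <;> rcases Finset.mem_insert.1 hy with rfl | hy
        · exact adj_refl _ _
        · exact hn y hy
        · exact adj_symm _ _ _ (hn x hx)
        · exact h2 _ (by simp [hx]) _ (by simp [hy])
      · rintro ⟨h1, h2⟩
        refine ⟨by simpa using h2, ?_⟩
        have hn : ∀ x ∈ σ, adj S (.inl (.inl w.1.1)) x ∧ adj S (.inl (.inr w.1.2)) x := fun x hx =>
          (hadjw x (hxS x hx)).1 (h1 _ (by simp) _ (by simp [hx]))
        intro x hx y hy
        simp only [Finset.mem_insert] at hx hy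
        rcases hx with rfl | rfl | hx <;> rcases hy with rfl | rfl | hy
        · exact adj_refl _ _
        · exact hij
        · exact (hn y hy).1
        · exact adj_symm _ _ _ hij
        · exact adj_refl _ _
        · exact (hn y hy).2
        · exact adj_symm _ _ _ (hn x hx).1
        · exact adj_symm _ _ _ (hn x hx).2
        · exact h1 _ (by simp [hx]) _ (by simp [hy])
    · have hτI : τ ⊆ I := fun x hx => (Finset.mem_insert.1 (hτ hx)).resolve_left
        (by rintro rfl; exact hwτ hx)
      rw [hK1 τ hτI, hK τ hτI, hold]

theorem seq_of_chain {d : ℕ} {A B : Set (Fin d → ℝ)}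
    (h : Relation.ReflTransGen ObtainedByShaving A B) :
    ∃ (m : ℕ) (Q : Fin (m + 1) → Set (Fin d → ℝ)), Q 0 = A ∧
      (∀ i : Fin m, ObtainedByShaving (Q i.castSucc) (Q i.succ)) ∧ Q (Fin.last m) = B := by
  induction h with
  | refl => exact ⟨0, fun _ => A, rfl, fun i => i.elim0, rfl⟩
  | @tail b c _ hbc ih =>
    obtain ⟨m, Q, h0, hs, hl⟩ := ih
    refine ⟨m + 1, Fin.snoc (α := fun _ => Set (Fin d → ℝ)) Q c, ?_, ?_, ?_⟩
    · rw [← h0]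
      exact Fin.snoc_castSucc (α := fun _ => Set (Fin d → ℝ)) c Q 0
    · intro i
      refine Fin.lastCases ?_ (fun i => ?_) i
      · rw [Fin.succ_last, Fin.snoc_last, Fin.snoc_castSucc, hl]
        exact hbc
      · rw [Fin.succ_castSucc, Fin.snoc_castSucc, Fin.snoc_castSucc]
        exact hs i
    · simp



/-- Polarity: a point outside a full-dimensional polytope violates a facet inequality. -/
theorem polar_sep {X : Type} [NormedAddCommGroup X] [NormedSpace ℝ X] [FiniteDimensional ℝ X]
    (V : Set X) (hV : V.Finite) {r : ℝ} (hr : 0 < r) (hball : Metric.ball (0:X) r ⊆ convexHull ℝ V)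
    {x : X} (hx : x ∉ convexHull ℝ V) :
    ∃ g : X →L[ℝ] ℝ, (∀ v ∈ V, g v ≤ 1) ∧ 1 < g x ∧
      Submodule.span ℝ {v | v ∈ V ∧ g v = 1} = ⊤ := by
  let D : Set (X →L[ℝ] ℝ) := {g | ∀ v ∈ V, g v ≤ 1}
  have hD : ∀ g ∈ D, ∀ y ∈ convexHull ℝ V, g y ≤ 1 := by
    intro g hg y hy
    have hc : Convex ℝ {y | g y ≤ 1} := convex_halfSpace_le g.toLinearMap.isLinear 1
    exact convexHull_min (s := V) (fun v hv => hg v hv) hc hy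
  have hDclosed : IsClosed D := by
    have : D = ⋂ v ∈ V, {g | g v ≤ 1} := by ext; simp [D]
    rw [this]
    exact isClosed_biInter fun v _ => isClosed_le (by fun_prop) continuous_const
  have hDbdd : D ⊆ Metric.closedBall 0 (2 / r) := by
    intro g hg
    rw [mem_closedBall_zero_iff]
    have hb : ∀ y : X, g y ≤ 2 / r * ‖y‖ := by
      intro y
      rcases eq_or_ne y 0 with rfl | hy
      · simp
      have hny : 0 < ‖y‖ := norm_pos_iff.2 hy
      have h1 := hD g hg ((r / 2 / ‖y‖) • y) (hball (by
        rw [mem_ball_zero_iff, norm_smul, Real.norm_of_nonneg (by positivity)]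
        rw [div_mul_cancel₀ _ hny.ne']; linarith))
      rw [map_smul, smul_eq_mul] at h1
      have h2 : g y = (2 / r * ‖y‖) * (r / 2 / ‖y‖ * g y) := by field_simp
      rw [h2]
      have : 0 ≤ 2 / r * ‖y‖ := by positivity
      nlinarith
    refine ContinuousLinearMap.opNorm_le_bound _ (by positivity) fun y => ?_
    rw [Real.norm_eq_abs, abs_le]
    refine ⟨?_, hb y⟩
    have := hb (-y)
    rw [map_neg, norm_neg] at this
    linarith
  have hDc : IsCompact D :=
    (isCompact_closedBall (0 : X →L[ℝ] ℝ) (2 / r)).of_isClosed_subset hDclosed hDbdd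
  -- separation
  have hVc : IsClosed (convexHull ℝ V) := (hV.isCompact_convexHull ℝ).isClosed
  obtain ⟨f, s, hf, hfx⟩ := geometric_hahn_banach_closed_point (convex_convexHull ℝ V) hVc hx
  have hs : 0 < s := by
    have := hf 0 (hball (Metric.mem_ball_self hr))
    simpa using this
  have hfD : s⁻¹ • f ∈ D := by
    intro v hv
    have := hf v (subset_convexHull ℝ V hv)
    simp only [smul_apply, smul_eq_mul]
    rw [inv_mul_le_iff₀ hs]; linarith
  have hfx1 : 1 < (s⁻¹ • f) x := by
    simp only [smul_apply, smul_eq_mul]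
    rw [lt_inv_mul_iff₀ hs]; linarith
  let ev : StrongDual ℝ (X →L[ℝ] ℝ) := ContinuousLinearMap.apply ℝ ℝ x
  have hev : ∀ g, ev g = g x := fun g => rfl
  let M : Set (X →L[ℝ] ℝ) := {g | g ∈ D ∧ ∀ g' ∈ D, ev g' ≤ ev g}
  have hMexp : IsExposed ℝ D M := fun _ => ⟨ev, rfl⟩
  have hMne : M.Nonempty := by
    obtain ⟨g, hg, hgm⟩ := hDc.exists_isMaxOn ⟨_, hfD⟩ ev.continuous.continuousOn
    exact ⟨g, hg, fun g' hg' => hgm hg'⟩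
  obtain ⟨g, hg⟩ := (hMexp.isCompact hDc).extremePoints_nonempty hMne
  have hgM : g ∈ M := hg.1
  have hgD := hMexp.isExtreme.extremePoints_subset_extremePoints hg
  refine ⟨g, hgM.1, lt_of_lt_of_le hfx1 (hgM.2 _ hfD), ?_⟩
  by_contra hspan
  obtain ⟨h, hh0, hh⟩ := Submodule.exists_le_ker_of_lt_top _ (lt_top_iff_ne_top.2 hspan)
  let k : X →L[ℝ] ℝ := LinearMap.toContinuousLinearMap h
  have hk : ∀ y, k y = h y := fun y => rfl
  have hev1 : ∀ᶠ ε in nhdsWithin (0:ℝ) (Set.Ioi 0), ∀ v ∈ hV.toFinset,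
      g v + ε * k v ≤ 1 ∧ g v - ε * k v ≤ 1 := by
    rw [Filter.eventually_all_finset]
    intro v hv
    rw [Set.Finite.mem_toFinset] at hv
    rcases (hgM.1 v hv).lt_or_eq with hlt | heq
    · have hc : ∀ a : ℝ, ∀ᶠ ε in nhdsWithin (0:ℝ) (Set.Ioi 0), g v + ε * a < 1 := by
        intro a
        have hc : Continuous (fun ε : ℝ => g v + ε * a) := by fun_prop
        have ht := (hc.tendsto 0).mono_left (nhdsWithin_le_nhds (s := Set.Ioi (0:ℝ)))
        simp only [zero_mul, add_zero] at ht
        exact ht.eventually (gt_mem_nhds hlt)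
      filter_upwards [hc (k v), hc (-k v)] with ε h1 h2
      exact ⟨h1.le, by linarith⟩
    · have : k v = 0 := hh (Submodule.subset_span ⟨hv, heq⟩)
      exact Filter.Eventually.of_forall fun ε => by simp [this, heq]
  obtain ⟨ε, hε, hpos⟩ := (hev1.and self_mem_nhdsWithin).exists
  have hpos : 0 < ε := hpos
  have h1 : g + ε • k ∈ D := fun v hv => by
    simpa using (hε v (by simpa using hv)).1
  have h2 : g - ε • k ∈ D := fun v hv => by
    simpa using (hε v (by simpa using hv)).2
  have h3 := (mem_extremePoints.1 hgD).2 _ h1 _ h2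
    ⟨1/2, 1/2, by norm_num, by norm_num, by norm_num, by module⟩
  apply hh0
  ext y
  have h4 := congrArg (fun q : X →L[ℝ] ℝ => q y) h3.1
  simp only [add_apply, smul_apply, smul_eq_mul, hk] at h4
  have : ε * h y = 0 := by linarith
  simpa [hpos.ne'] using this

/-- Every point of the affine span outside `P` violates the inequality of some facet. -/
theorem facet_sep {d : ℕ} {P : Set (Fin d → ℝ)} (hP : IsPolytope P) (hdim : 1 ≤ polyDim P)
    (hne : P.Nonempty) {x : Fin d → ℝ} (hxA : x ∈ affineSpan ℝ P) (hx : x ∉ P) :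
    ∃ F, IsFacetOf F P ∧ ∀ (l : (Fin d → ℝ) →ₗ[ℝ] ℝ) (c : ℝ), (∀ y ∈ P, l y ≤ c) →
      F = {y | y ∈ P ∧ l y = c} → c < l x := by
  obtain ⟨V, hV⟩ := hP
  have hconv : Convex ℝ P := hV ▸ convex_convexHull ℝ _
  set W := (affineSpan ℝ P).direction with hW
  obtain ⟨p, hp⟩ := hne.intrinsicInterior hconv
  have hpP : p ∈ P := intrinsicInterior_subset hp
  have hpA : p ∈ affineSpan ℝ P := subset_affineSpan ℝ P hpP
  have hball : ∃ r > 0, ∀ w ∈ W, ‖w‖ < r → p + w ∈ P := by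
    rw [mem_intrinsicInterior] at hp
    obtain ⟨q, hq, rfl⟩ := hp
    rw [mem_interior_iff_mem_nhds, Metric.mem_nhds_iff] at hq
    obtain ⟨r, hr, hrb⟩ := hq
    refine ⟨r, hr, fun w hw hwr => ?_⟩
    have hmem : (q : Fin d → ℝ) + w ∈ affineSpan ℝ P := by
      rw [add_comm]; exact AffineSubspace.vadd_mem_of_mem_direction hw q.2
    have : (⟨(q : Fin d → ℝ) + w, hmem⟩ : affineSpan ℝ P) ∈ Metric.ball q r := by
      rw [Metric.mem_ball, Subtype.dist_eq, dist_eq_norm]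
      simpa using hwr
    exact hrb this
  obtain ⟨r, hr, hball⟩ := hball
  have hsubW : ∀ y ∈ affineSpan ℝ P, y - p ∈ W := fun y hy =>
    AffineSubspace.vsub_mem_direction hy hpA
  -- transport to `W`
  let V' : Set W := {w | p + (w : Fin d → ℝ) ∈ V}
  have hV'fin : V'.Finite := by
    apply Set.Finite.preimage (f := fun w : W => p + (w : Fin d → ℝ)) _ V.finite_toSet
    intro a _ b _ hab
    exact Subtype.ext (add_left_cancel hab)
  let T : W →ᵃ[ℝ] (Fin d → ℝ) := AffineMap.const ℝ W p + W.subtype.toAffineMap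
  have hT : ∀ w : W, T w = p + w := fun w => rfl
  have hVP : ∀ v ∈ V, v ∈ P := fun v hv => hV ▸ subset_convexHull ℝ _ hv
  have himg : Set.image T V' = V := by
    ext v
    constructor
    · rintro ⟨w, hw, rfl⟩; exact hw
    · intro hv
      refine ⟨⟨v - p, hsubW v (subset_affineSpan ℝ P (hVP v hv))⟩, ?_, ?_⟩
      · show p + (v - p) ∈ V
        simpa using hv
      · simp [hT]
  have hconvT : ∀ w : W, w ∈ convexHull ℝ V' ↔ p + (w : Fin d → ℝ) ∈ P := by
    intro w
    rw [hV, ← himg, ← AffineMap.image_convexHull, ← hT]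
    constructor
    · exact fun h => ⟨w, h, rfl⟩
    · rintro ⟨w', hw', h⟩
      rw [hT, hT] at h
      rwa [← Subtype.ext (add_left_cancel h)]
  have hxW := hsubW x hxA
  obtain ⟨g, hgV, hgx, hgspan⟩ := polar_sep V' hV'fin hr (x := (⟨x - p, hxW⟩ : W))
    (fun w hw => (hconvT w).2 (hball w w.2 (by simpa using hw)))
    (fun h => hx (by simpa using (hconvT _).1 h))
  obtain ⟨G, hG⟩ := LinearMap.exists_extend g.toLinearMap
  have hGw : ∀ w : W, G w = g w := fun w => by
    have := congrArg (fun q : W →ₗ[ℝ] ℝ => q w) hG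
    simpa using this
  have hGP : ∀ y ∈ P, G y ≤ G p + 1 := by
    intro y hy
    have hyW := hsubW y (subset_affineSpan ℝ P hy)
    have h1 : (⟨y - p, hyW⟩ : W) ∈ convexHull ℝ V' := (hconvT _).2 (by simpa using hy)
    have hc : Convex ℝ {w : W | g w ≤ 1} := convex_halfSpace_le g.toLinearMap.isLinear 1
    have h2 : g ⟨y - p, hyW⟩ ≤ 1 := convexHull_min (s := V') (fun v hv => hgV v hv) hc h1
    rw [← hGw, map_sub] at h2
    linarith
  have hG0 : Module.finrank ℝ W = polyDim P := rfl
  -- a tight vertex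
  have htight : ∃ v0 : W, v0 ∈ V' ∧ g v0 = 1 := by
    by_contra hcon
    have hempty : {v | v ∈ V' ∧ g v = 1} = ∅ := by
      ext v
      simp only [Set.mem_ofPred_eq, Set.mem_empty_iff_false, iff_false]
      exact fun h => hcon ⟨v, h⟩
    rw [hempty, Submodule.span_empty] at hgspan
    have := finrank_top ℝ W
    rw [← hgspan, finrank_bot] at this
    omega
  obtain ⟨v0, hv0V, hv0⟩ := htight
  let F : Set (Fin d → ℝ) := {y | y ∈ P ∧ G y = G p + 1}
  have hFmem : ∀ y, y ∈ F ↔ y ∈ P ∧ G y = G p + 1 := fun y => Iff.rfl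
  have hTF : ∀ w ∈ V', g w = 1 → p + (w : Fin d → ℝ) ∈ F := by
    intro w hw hgw
    refine (hFmem _).2 ⟨hVP _ hw, ?_⟩
    rw [map_add, hGw, hgw]
  have hFne : F.Nonempty := ⟨_, hTF v0 hv0V hv0⟩
  have hFface : IsFaceOf F P := by
    refine ⟨hFne, fun _ => ⟨LinearMap.toContinuousLinearMap G, ?_⟩⟩
    ext y
    simp only [hFmem, Set.mem_ofPred_eq, LinearMap.coe_toContinuousLinearMap']
    refine and_congr_right fun hy => ⟨fun h z hz => h ▸ hGP z hz, fun h => ?_⟩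
    have h1 := h _ (hTF v0 hv0V hv0).1
    rw [((hFmem _).1 (hTF v0 hv0V hv0)).2] at h1
    exact le_antisymm (hGP y hy) h1
  have hdir : (affineSpan ℝ F).direction =
      (LinearMap.ker g.toLinearMap).map W.subtype := by
    rw [direction_affineSpan]
    apply le_antisymm
    · rw [vectorSpan, Submodule.span_le]
      rintro _ ⟨a, ha, b, hb, rfl⟩
      rw [hFmem] at ha hb
      have habW : a - b ∈ W := AffineSubspace.vsub_mem_direction
        (subset_affineSpan ℝ P ha.1) (subset_affineSpan ℝ P hb.1)
      refine ⟨⟨a - b, habW⟩, ?_, rfl⟩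
      show g ⟨a - b, habW⟩ = 0
      rw [← hGw, map_sub, ha.2, hb.2, sub_self]
    · rintro _ ⟨w, hw, rfl⟩
      have hw0 : g w = 0 := hw
      have key : ∀ z : W, ((z - g z • v0 : W) : Fin d → ℝ) ∈ vectorSpan ℝ F := by
        intro z
        have hz : z ∈ Submodule.span ℝ {v | v ∈ V' ∧ g v = 1} := hgspan ▸ Submodule.mem_top
        induction hz using Submodule.span_induction with
        | mem z hz =>
          have := vsub_mem_vectorSpan ℝ (hTF z hz.1 hz.2) (hTF v0 hv0V hv0)
          simpa [hz.2] using this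
        | zero => simp
        | add a b _ _ ha hb =>
          have := Submodule.add_mem _ ha hb
          convert this using 1
          push_cast [map_add]
          module
        | smul t a _ ha =>
          have := Submodule.smul_mem _ t ha
          convert this using 1
          push_cast [map_smul, smul_eq_mul]
          module
      have := key w
      simpa [hw0] using this
  have hgne : (g.toLinearMap : Module.Dual ℝ W) ≠ 0 := by
    intro h
    have : g v0 = 0 := congrArg (fun q : Module.Dual ℝ W => q v0) h
    rw [hv0] at this
    norm_num at this
  refine ⟨F, ⟨hFface, ?_⟩, ?_⟩
  · have h1 := Module.Dual.finrank_ker_add_one_of_ne_zero hgne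
    rw [polyDim, hdir, LinearEquiv.finrank_eq
      ((LinearMap.ker g.toLinearMap).equivMapOfInjective W.subtype W.injective_subtype).symm]
    exact h1
  · intro l c hl hF
    have hpF : p ∉ F := by
      rw [hFmem]; rintro ⟨-, h⟩; linarith
    have hlp : l p < c := lt_of_le_of_ne (hl p hpP) (fun h => hpF (by rw [hF]; exact ⟨hpP, h⟩))
    have heq : l.comp W.subtype = (c - l p) • g.toLinearMap := by
      apply LinearMap.ext_on hgspan
      intro v hv
      have hvF := hTF v hv.1 hv.2
      rw [hF] at hvF
      have h1 : l (p + v) = c := hvF.2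
      rw [map_add] at h1
      simp only [LinearMap.comp_apply, Submodule.subtype_apply, LinearMap.smul_apply,
        ContinuousLinearMap.coe_coe, hv.2, smul_eq_mul]
      linarith
    have h1 := congrArg (fun q : W →ₗ[ℝ] ℝ => q ⟨x - p, hxW⟩) heq
    simp only [LinearMap.comp_apply, Submodule.subtype_apply, LinearMap.smul_apply,
        ContinuousLinearMap.coe_coe, smul_eq_mul, map_sub] at h1
    nlinarith



theorem nonempty_of_polyDim {d : ℕ} {P : Set (Fin d → ℝ)} (hdim : 1 ≤ polyDim P) :
    P.Nonempty := by
  by_contra h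
  rw [Set.not_nonempty_iff_eq_empty] at h
  subst h
  simp [polyDim] at hdim

theorem facet_functional {d : ℕ} {P F : Set (Fin d → ℝ)} (hF : IsFaceOf F P) :
    ∃ (l : (Fin d → ℝ) →ₗ[ℝ] ℝ) (c : ℝ), (∀ y ∈ P, l y ≤ c) ∧ F = {y | y ∈ P ∧ l y = c} := by
  obtain ⟨hne, hexp⟩ := hF
  obtain ⟨f, hf⟩ := hexp hne
  obtain ⟨x0, hx0⟩ := hne
  rw [hf] at hx0
  refine ⟨f.toLinearMap, f x0, fun y hy => hx0.2 y hy, ?_⟩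
  rw [hf]
  ext y
  simp only [Set.mem_ofPred_eq, ContinuousLinearMap.coe_coe]
  refine and_congr_right fun hy => ⟨fun h => le_antisymm (hx0.2 y hy) (h x0 hx0.1), fun h z hz => ?_⟩
  rw [h]; exact hx0.2 z hz

theorem simple_rep {d : ℕ} {P : Set (Fin d → ℝ)} (hP : IsSimplePolytope P)
    (hdim : 1 ≤ polyDim P) {ι : Type} [Fintype ι] (φ : ι → Set (Fin d → ℝ))
    (hφ : ∀ i, IsFacetOf (φ i) P) (hinj : Function.Injective φ)
    (hsurj : ∀ F, IsFacetOf F P → ∃ i, φ i = F) :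
    ∃ (l : ι → (Fin d → ℝ) →ₗ[ℝ] ℝ) (c : ι → ℝ),
      Rep P (affineSpan ℝ P).direction Finset.univ l c ∧
      ∀ i, φ i = {y | y ∈ P ∧ l i y = c i} := by
  classical
  have hne := nonempty_of_polyDim hdim
  obtain ⟨hpoly, hsimple⟩ := hP
  choose l c hle hφe using fun i => facet_functional (hφ i).1
  set W := (affineSpan ℝ P).direction with hW
  have hH : HRep P W Finset.univ l c := by
    refine ⟨fun x hx i _ => hle i x hx, fun x hx y hy => AffineSubspace.vsub_mem_direction
      (subset_affineSpan ℝ P hy) (subset_affineSpan ℝ P hx), ?_⟩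
    intro x hx u hu hall
    by_contra hcon
    have hA : x + u ∈ affineSpan ℝ P := by
      rw [add_comm]
      exact AffineSubspace.vadd_mem_of_mem_direction hu (subset_affineSpan ℝ P hx)
    obtain ⟨F, hF, hsep⟩ := facet_sep hpoly hdim hne hA hcon
    obtain ⟨i, rfl⟩ := hsurj F hF
    have h1 := hsep (l i) (c i) (hle i) (hφe i)
    have h2 := hall i (Finset.mem_univ i)
    linarith
  have hcomp : IsCompact P := by
    obtain ⟨V, hV⟩ := hpoly
    rw [hV]
    exact V.finite_toSet.isCompact_convexHull ℝ
  refine ⟨l, c, ⟨hH, ?_⟩, hφe⟩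
  intro x hx t
  -- a vertex of the smallest face containing `x`
  let τ : Finset ι := Finset.univ.filter (fun i => l i x = c i)
  have hface := hH.fc_face (τ := τ) (Finset.subset_univ _)
    ⟨x, hx, fun i hi => (Finset.mem_filter.1 hi).2⟩
  obtain ⟨v, hv⟩ := (hface.2.isCompact hcomp).extremePoints_nonempty hface.1
  have hvτ : v ∈ Fc P l c τ := hv.1
  have hvP := hface.2.isExtreme.extremePoints_subset_extremePoints hv
  -- no motion at `v`
  have hker : ∀ u ∈ W, (∀ i, l i v = c i → l i u = 0) → u = 0 := by
    intro u hu hui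
    obtain ⟨ε, hε, h1, -⟩ := hH.move hvτ.1 hu (fun i _ hi => (hui i hi).le)
    obtain ⟨δ, hδ, h2, -⟩ := hH.move hvτ.1 (W.neg_mem hu) (fun i _ hi => by
      rw [map_neg, hui i hi, neg_zero])
    have h3 := (mem_extremePoints.1 hvP).2 _ h1 _ h2
      ⟨δ / (ε + δ), ε / (ε + δ), by positivity, by positivity, by field_simp; ring, by
        have h5 : δ / (ε + δ) = 1 - ε / (ε + δ) := by field_simp; ring
        have h4 : ε / (ε + δ) * δ = δ / (ε + δ) * ε := by ring
        have h6 : (δ / (ε + δ)) • (v + ε • u) + (ε / (ε + δ)) • (v + δ • -u) =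
          (δ / (ε + δ) + ε / (ε + δ)) • v +
            (δ / (ε + δ) * ε - ε / (ε + δ) * δ) • u := by module
        rw [h6, h4, h5]; module⟩
    have h4 : ε • u = 0 := by simpa using h3.1
    exact (smul_eq_zero.1 h4).resolve_left hε.ne'
  let A : Finset ι := Finset.univ.filter (fun i => l i v = c i)
  have hAmem : ∀ i, i ∈ A ↔ l i v = c i := fun i => by simp [A]
  have hsingle : Fc P l c A = {v} := by
    ext y
    simp only [Set.mem_singleton_iff]
    constructor
    · rintro ⟨hy, hyA⟩
      have := hker (y - v) (hH.dir v hvτ.1 y hy) (fun i hi => by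
        rw [map_sub, hyA i ((hAmem i).2 hi), hi, sub_self])
      exact sub_eq_zero.1 this
    · rintro rfl
      exact ⟨hvτ.1, fun i hi => (hAmem i).1 hi⟩
  have hvert : IsVertexOf v P := by
    have := hH.fc_face (τ := A) (Finset.subset_univ _) (by rw [hsingle]; exact Set.singleton_nonempty v)
    rwa [hsingle] at this
  have hcard : A.card = Module.finrank ℝ W := by
    have h1 := hsimple v hvert
    have h2 : {F : Set (Fin d → ℝ) | IsFacetOf F P ∧ v ∈ F} = φ '' (A : Set ι) := by
      ext F
      constructor
      · rintro ⟨hF, hvF⟩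
        obtain ⟨i, rfl⟩ := hsurj F hF
        refine ⟨i, ?_, rfl⟩
        rw [hφe i] at hvF
        exact Finset.mem_coe.2 ((hAmem i).2 hvF.2)
      · rintro ⟨i, hi, rfl⟩
        refine ⟨hφ i, ?_⟩
        rw [hφe i]
        exact ⟨hvτ.1, (hAmem i).1 (Finset.mem_coe.1 hi)⟩
    rw [h2, Set.ncard_image_of_injective _ hinj, Set.ncard_coe_finset] at h1
    exact h1
  -- the evaluation map is bijective
  let ev : W →ₗ[ℝ] (A → ℝ) := LinearMap.pi fun i : A => (l i.1).comp W.subtype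
  have hevinj : Function.Injective ev := by
    rw [← LinearMap.ker_eq_bot, LinearMap.ker_eq_bot']
    intro u hu
    apply Subtype.ext
    apply hker u u.2
    intro i hi
    have := congrFun hu ⟨i, (hAmem i).2 hi⟩
    simpa [ev] using this
  have hevsurj : Function.Surjective ev :=
    (LinearMap.injective_iff_surjective_of_finrank_eq_finrank (by simp [hcard])).1 hevinj
  obtain ⟨u, hu⟩ := hevsurj (fun i => t i.1)
  refine ⟨u, u.2, fun i _ hi => ?_⟩
  have hiA : i ∈ A := (hAmem i).2 (hvτ.2 i (by simp [τ, hi]))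
  have := congrFun hu ⟨i, hiA⟩
  simpa [ev] using this



section zmod
variable {N : ℕ} [NeZero N]

theorem cast_inj {p q : ℕ} (hp : p < N) (hq : q < N) : (p : ZMod N) = q ↔ p = q := by
  rw [ZMod.natCast_eq_natCast_iff', Nat.mod_eq_of_lt hp, Nat.mod_eq_of_lt hq]

theorem exists_cast (a : ZMod N) : ∃ p < N, a = (p : ZMod N) :=
  ⟨a.val, ZMod.val_lt a, (ZMod.natCast_zmod_val a).symm⟩

theorem sub_val {a b : ℕ} (ha : a < N) (hb : b < N) :
    ((b : ZMod N) - a).val = if a ≤ b then b - a else b + N - a := by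
  split_ifs with h
  · rw [← Nat.cast_sub h, ZMod.val_natCast, Nat.mod_eq_of_lt (by omega)]
  · have : (b : ZMod N) - a = ((b + N - a : ℕ) : ZMod N) := by
      rw [Nat.cast_sub (by omega)]
      simp
    rw [this, ZMod.val_natCast, Nat.mod_eq_of_lt (by omega)]

theorem pair_eq {α : Type} [DecidableEq α] {a b c e : α} (h : ({a, b} : Finset α) = {c, e}) :
    (a = c ∧ b = e) ∨ (a = e ∧ b = c) := by
  have h1 : a ∈ ({c, e} : Finset α) := h ▸ by simp
  have h2 : b ∈ ({c, e} : Finset α) := h ▸ by simp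
  have h3 : c ∈ ({a, b} : Finset α) := h ▸ by simp
  have h4 : e ∈ ({a, b} : Finset α) := h ▸ by simp
  simp only [Finset.mem_insert, Finset.mem_singleton] at h1 h2 h3 h4
  rcases h1 with rfl | rfl <;> rcases h2 with rfl | rfl <;> simp_all

theorem pair_cast_eq {p q r s : ℕ} (hp : p < N) (hq : q < N) (hr : r < N) (hs : s < N)
    (h : ({(p : ZMod N), (q : ZMod N)} : Finset (ZMod N)) = {(r : ZMod N), (s : ZMod N)}) :
    (p = r ∧ q = s) ∨ (p = s ∧ q = r) := by
  rcases pair_eq h with ⟨h1, h2⟩ | ⟨h1, h2⟩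
  · exact Or.inl ⟨(cast_inj hp hr).1 h1, (cast_inj hq hs).1 h2⟩
  · exact Or.inr ⟨(cast_inj hp hs).1 h1, (cast_inj hq hr).1 h2⟩

theorem crosses_iff {p q r s : ℕ} (hpq : p < q) (hq : q < N) (hrs : r < s) (hs : s < N) :
    Crosses N {(p : ZMod N), (q : ZMod N)} {(r : ZMod N), (s : ZMod N)} ↔
      (p < r ∧ r < q ∧ q < s) ∨ (r < p ∧ p < s ∧ s < q) := by
  constructor
  · rintro ⟨a, b, c, e, h1, h2, ⟨h3, h4⟩, h5, h6⟩
    rcases pair_eq h1 with ⟨rfl, rfl⟩ | ⟨rfl, rfl⟩ <;>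
    rcases pair_eq h2 with ⟨rfl, rfl⟩ | ⟨rfl, rfl⟩ <;>
    rw [sub_val (by omega) (by omega)] at h3 h5 <;>
    rw [sub_val (by omega) (by omega), sub_val (by omega) (by omega)] at h4 h6 <;>
    split_ifs at * <;> omega
  · rintro (⟨h1, h2, h3⟩ | ⟨h1, h2, h3⟩)
    · refine ⟨p, q, r, s, rfl, rfl, ⟨?_, ?_⟩, ?_, ?_⟩
      · rw [sub_val (by omega) (by omega)]; split_ifs <;> omega
      · rw [sub_val (by omega) (by omega), sub_val (by omega) (by omega)]; split_ifs <;> omega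
      · rw [sub_val (by omega) (by omega)]; split_ifs <;> omega
      · rw [sub_val (by omega) (by omega), sub_val (by omega) (by omega)]; split_ifs <;> omega
    · refine ⟨p, q, s, r, rfl, Finset.pair_comm _ _, ⟨?_, ?_⟩, ?_, ?_⟩
      · rw [sub_val (by omega) (by omega)]; split_ifs <;> omega
      · rw [sub_val (by omega) (by omega), sub_val (by omega) (by omega)]; split_ifs <;> omega
      · rw [sub_val (by omega) (by omega)]; split_ifs <;> omega
      · rw [sub_val (by omega) (by omega), sub_val (by omega) (by omega)]; split_ifs <;> omega

theorem isDiag_of {p q : ℕ} (h1 : p + 2 ≤ q) (h2 : q + 2 ≤ p + N) :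
    IsDiag N {(p : ZMod N), (q : ZMod N)} := by
  obtain ⟨m, rfl⟩ : ∃ m, q = p + m := ⟨q - p, by omega⟩
  have key : ∀ k : ℕ, 0 < k → k < N → (k : ZMod N) ≠ 0 := by
    intro k hk hkN h
    rw [ZMod.natCast_eq_zero_iff] at h
    exact absurd (Nat.le_of_dvd hk h) (by omega)
  refine ⟨p, (p + m : ℕ), rfl, ?_, ?_, ?_⟩
  · intro h
    apply key m (by omega) (by omega)
    push_cast at h
    linear_combination h
  · intro h
    apply key (m - 1) (by omega) (by omega)
    rw [Nat.cast_sub (by omega)]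
    push_cast at h ⊢
    linear_combination h
  · intro h
    apply key (m + 1) (by omega) (by omega)
    push_cast at h ⊢
    linear_combination h

theorem of_isDiag {e : Finset (ZMod N)} (h : IsDiag N e) :
    ∃ p q : ℕ, p + 2 ≤ q ∧ q < N ∧ q + 2 ≤ p + N ∧ e = {(p : ZMod N), (q : ZMod N)} := by
  obtain ⟨a, b, rfl, h1, h2, h3⟩ := h
  obtain ⟨p, hp, rfl⟩ := exists_cast a
  obtain ⟨q, hq, rfl⟩ := exists_cast b
  have h1' : q ≠ p := by rintro rfl; exact h1 rfl
  have h2' : q ≠ p + 1 := by rintro rfl; apply h2; push_cast; rfl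
  have h3' : p ≠ q + 1 := by rintro rfl; apply h3; push_cast; ring
  have h4 : q + 1 ≠ p + N := by
    intro h
    apply h3
    have := congrArg (Nat.cast : ℕ → ZMod N) h
    push_cast at this
    simp at this
    rw [← this]; ring
  have h5 : p + 1 ≠ q + N := by
    intro h
    apply h2
    have := congrArg (Nat.cast : ℕ → ZMod N) h
    push_cast at this
    simp at this
    rw [← this]
  rcases lt_or_gt_of_ne h1' with h | h
  · exact ⟨q, p, by omega, hp, by omega, Finset.pair_comm _ _⟩
  · exact ⟨p, q, by omega, hq, by omega, rfl⟩

end zmod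

section model
variable {n : ℕ} [NeZero n]

/-- representative of `p + n` -/
def opp (n p : ℕ) : ℕ := if p < n then p + n else p - n

theorem opp_cast (p : ℕ) : ((opp n p : ℕ) : ZMod (2 * n)) = p + n := by
  unfold opp
  split_ifs with h
  · push_cast; rfl
  · have h1 : ((2 * n : ℕ) : ZMod (2 * n)) = 0 := ZMod.natCast_self _
    push_cast at h1
    rw [Nat.cast_sub (by omega)]
    linear_combination -h1

theorem centralSym_pair (p q : ℕ) : centralSym n {(p : ZMod (2 * n)), (q : ZMod (2 * n))} =
    {((opp n p : ℕ) : ZMod (2 * n)), ((opp n q : ℕ) : ZMod (2 * n))} := by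
  simp [centralSym, Finset.image_insert, opp_cast]

theorem isDiameter_iff {p q : ℕ} (hp : p < 2 * n) (hq : q < 2 * n) :
    IsDiameter n {(p : ZMod (2 * n)), (q : ZMod (2 * n))} ↔ q = p + n ∨ p = q + n := by
  constructor
  · rintro ⟨a, h⟩
    obtain ⟨r, hr, rfl⟩ := exists_cast a
    rw [← opp_cast] at h
    have := pair_cast_eq hp hq hr (by unfold opp; split_ifs <;> omega) h
    unfold opp at this
    split_ifs at this <;> omega
  · rintro (rfl | rfl)
    · exact ⟨p, by push_cast; rfl⟩
    · exact ⟨q, by push_cast; rw [Finset.pair_comm]⟩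

/-- The diameter with index `a`. -/
def diam (a : Fin n) : Finset (ZMod (2 * n)) :=
  {((a.1 : ℕ) : ZMod (2 * n)), ((a.1 + n : ℕ) : ZMod (2 * n))}

/-- The diagonal of an arc. -/
def dg (w : Arc n) : Finset (ZMod (2 * n)) :=
  {((w.1.1.1 : ℕ) : ZMod (2 * n)), ((w.1.1.1 + w.len : ℕ) : ZMod (2 * n))}

/-- The element of the model with a given index. -/
def emb : Idx n → DElem n
  | .inl (.inl a) => .red (diam a)
  | .inl (.inr a) => .blue (diam a)
  | .inr w => .pair {dg w, centralSym n (dg w)}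

theorem Arc.len_lt (w : Arc n) : w.len < n := dst_lt _ _

theorem Arc.two_le (w : Arc n) : 2 ≤ w.len := w.2

theorem diam_isDiag (hn : 2 ≤ n) (a : Fin n) : IsDiag (2 * n) (diam a) := by
  apply isDiag_of <;> omega

theorem diam_isDiameter (a : Fin n) : IsDiameter n (diam a) :=
  (isDiameter_iff (by omega) (by omega)).2 (Or.inl rfl)

theorem emb_mem (hn : 2 ≤ n) (x : Idx n) : memM n (emb x) := by
  rcases x with (a | a) | w
  · exact ⟨diam_isDiag hn a, diam_isDiameter a⟩
  · exact ⟨diam_isDiag hn a, diam_isDiameter a⟩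
  · refine ⟨dg w, ?_, ?_, rfl⟩
    · have := w.two_le
      have := w.len_lt
      apply isDiag_of <;> omega
    · have := w.two_le
      have := w.len_lt
      rw [dg, isDiameter_iff (by omega) (by omega)]
      omega

theorem diam_inj {a b : Fin n} (h : diam a = diam b) : a = b := by
  have := pair_cast_eq (by omega) (by omega) (by omega) (by omega) h
  apply Fin.ext
  omega

/-- lower endpoint of the opposite diagonal -/
def lo (w : Arc n) : ℕ := if w.1.1.1 + w.len < n then w.1.1.1 + n else w.1.1.1 + w.len - n
/-- upper endpoint of the opposite diagonal -/
def hi (w : Arc n) : ℕ := if w.1.1.1 + w.len < n then w.1.1.1 + w.len + n else w.1.1.1 + n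

theorem centralSym_dg (w : Arc n) : centralSym n (dg w) =
    {((lo w : ℕ) : ZMod (2 * n)), ((hi w : ℕ) : ZMod (2 * n))} := by
  have h1 := w.len_lt
  have h2 := w.1.1.2
  rw [dg, centralSym_pair]
  have e1 : opp n w.1.1.1 = w.1.1.1 + n := by unfold opp; split_ifs; rfl
  rw [e1]
  by_cases h : w.1.1.1 + w.len < n
  · have e2 : opp n (w.1.1.1 + w.len) = w.1.1.1 + w.len + n := by unfold opp; rw [if_pos h]
    rw [e2, lo, hi, if_pos h, if_pos h]
  · have e2 : opp n (w.1.1.1 + w.len) = w.1.1.1 + w.len - n := by unfold opp; rw [if_neg h]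
    rw [e2, lo, hi, if_neg h, if_neg h, Finset.pair_comm]

theorem lo_lt_hi (w : Arc n) : lo w < hi w ∧ hi w < 2 * n := by
  have h1 := w.len_lt
  have h2 := w.1.1.2
  have h3 := w.two_le
  unfold lo hi
  split_ifs <;> omega

theorem arc_ext {w v : Arc n} (h1 : w.1.1.1 = v.1.1.1) (h2 : w.len = v.len) : w = v := by
  obtain ⟨⟨a, b⟩, hw⟩ := w
  obtain ⟨⟨c, e⟩, hv⟩ := v
  simp only [Arc.len] at *
  obtain rfl : a = c := Fin.ext h1
  obtain rfl : b = e := by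
    apply Fin.ext
    unfold dst at h2
    split_ifs at h2 <;> omega
  rfl

theorem emb_inj : Function.Injective (emb (n := n)) := by
  rintro ((a | a) | w) ((b | b) | v) h <;> simp only [emb, DElem.red.injEq, DElem.blue.injEq,
    DElem.pair.injEq, reduceCtorEq] at h
  · rw [diam_inj h]
  · rw [diam_inj h]
  · have h1 := w.len_lt
    have h2 := w.1.1.2
    have h3 := w.two_le
    have h1' := v.len_lt
    have h2' := v.1.1.2
    have h3' := v.two_le
    have hmem : dg w ∈ ({dg v, centralSym n (dg v)} : Finset _) := h ▸ by simp
    rw [centralSym_dg] at hmem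
    simp only [Finset.mem_insert, Finset.mem_singleton] at hmem
    have hlt := lo_lt_hi v
    congr 1
    rcases hmem with hm | hm
    · have := pair_cast_eq (by omega) (by omega) (by omega) (by omega) hm
      exact arc_ext (by omega) (by omega)
    · have := pair_cast_eq (by omega) (by omega) (by omega) (by omega) hm
      unfold lo hi at this
      split_ifs at this <;> exact arc_ext (by omega) (by omega)

/-- the arc with given start and length -/
theorem exists_arc {a k : ℕ} (ha : a < n) (hk : 2 ≤ k) (hkn : k < n) :
    ∃ w : Arc n, w.1.1.1 = a ∧ w.len = k := by
  have h : dst (⟨a, ha⟩ : Fin n) ⟨if a + k < n then a + k else a + k - n, by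
      split_ifs <;> omega⟩ = k := by
    unfold dst
    simp only
    split_ifs <;> omega
  exact ⟨⟨(⟨a, ha⟩, ⟨if a + k < n then a + k else a + k - n, by split_ifs <;> omega⟩), by
    simp only [h]; exact hk⟩, rfl, h⟩

theorem centralSym_centralSym (e : Finset (ZMod (2 * n))) : centralSym n (centralSym n e) = e := by
  have h1 : ((2 * n : ℕ) : ZMod (2 * n)) = 0 := ZMod.natCast_self _
  push_cast at h1
  rw [centralSym, centralSym, Finset.image_image]
  have h2 : ((fun x : ZMod (2 * n) => x + (n : ZMod (2 * n))) ∘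
      fun x : ZMod (2 * n) => x + (n : ZMod (2 * n))) = id := by
    funext x
    simp only [Function.comp, id]
    linear_combination h1
  rw [h2, Finset.image_id]

theorem emb_surj (x : DElem n) (hx : memM n x) : ∃ i, emb i = x := by
  have hdiam : ∀ e, IsDiag (2 * n) e → IsDiameter n e → ∃ a : Fin n, diam a = e := by
    intro e h1 h2
    obtain ⟨p, q, hpq, hq, -, rfl⟩ := of_isDiag h1
    rw [isDiameter_iff (by omega) (by omega)] at h2
    obtain rfl : q = p + n := by omega
    exact ⟨⟨p, by omega⟩, rfl⟩
  rcases x with s | e | e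
  · obtain ⟨e, h1, h2, rfl⟩ := hx
    obtain ⟨p, q, hpq, hq, hqp, rfl⟩ := of_isDiag h1
    rw [isDiameter_iff (by omega) (by omega)] at h2
    have key : ∀ w : Arc n, (dg w = {(p : ZMod (2 * n)), (q : ZMod (2 * n))} ∨
        centralSym n (dg w) = {(p : ZMod (2 * n)), (q : ZMod (2 * n))}) →
        emb (.inr w) = .pair {{(p : ZMod (2 * n)), (q : ZMod (2 * n))},
          centralSym n {(p : ZMod (2 * n)), (q : ZMod (2 * n))}} := by
      rintro w (h | h)
      · rw [emb, h]
      · rw [emb, ← h, centralSym_centralSym, Finset.pair_comm]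
    by_cases h3 : q < p + n
    · by_cases h4 : p < n
      · obtain ⟨w, hw1, hw2⟩ := exists_arc (n := n) h4 (show 2 ≤ q - p by omega) (by omega)
        refine ⟨_, key w (Or.inl ?_)⟩
        rw [dg, hw1, hw2, show p + (q - p) = q by omega]
      · obtain ⟨w, hw1, hw2⟩ := exists_arc (n := n) (a := p - n) (by omega)
          (show 2 ≤ q - p by omega) (by omega)
        refine ⟨_, key w (Or.inr ?_)⟩
        rw [dg, hw1, hw2, centralSym_pair]
        have e1 : opp n (p - n) = p := by unfold opp; split_ifs <;> omega
        have e2 : opp n (p - n + (q - p)) = q := by unfold opp; split_ifs <;> omega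
        rw [e1, e2]
    · obtain ⟨w, hw1, hw2⟩ := exists_arc (n := n) (a := q - n) (by omega)
        (show 2 ≤ p + 2 * n - q by omega) (by omega)
      refine ⟨_, key w (Or.inr ?_)⟩
      rw [dg, hw1, hw2, centralSym_pair]
      have e1 : opp n (q - n) = q := by unfold opp; split_ifs <;> omega
      have e2 : opp n (q - n + (p + 2 * n - q)) = p := by unfold opp; split_ifs <;> omega
      rw [e1, e2, Finset.pair_comm]
  · obtain ⟨a, rfl⟩ := hdiam e hx.1 hx.2
    exact ⟨.inl (.inl a), rfl⟩
  · obtain ⟨a, rfl⟩ := hdiam e hx.1 hx.2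
    exact ⟨.inl (.inr a), rfl⟩

theorem diam_compat (a : Fin n) (w : Arc n) :
    (∀ f ∈ ({dg w, centralSym n (dg w)} : Finset (Finset (ZMod (2 * n)))),
      ¬ Crosses (2 * n) (diam a) f) ↔ w.out a := by
  have h1 := w.len_lt
  have h2 := w.1.1.2
  have h3 := w.two_le
  have h4 := a.2
  have hlt := lo_lt_hi w
  rw [centralSym_dg]
  simp only [Finset.mem_insert, Finset.mem_singleton, forall_eq_or_imp, forall_eq]
  rw [diam, dg, crosses_iff (by omega) (by omega) (by omega) (by omega),
    crosses_iff (by omega) (by omega) hlt.1 hlt.2]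
  unfold lo hi Arc.out
  change _ ↔ ¬ (0 < dst w.1.1 a ∧ dst w.1.1 a < w.len)
  generalize w.len = k at *
  unfold dst
  split_ifs <;> omega

theorem Arc.end_eq (w : Arc n) : (w.1.1.1 + w.len < n ∧ w.1.2.1 = w.1.1.1 + w.len) ∨
    (n ≤ w.1.1.1 + w.len ∧ w.1.2.1 = w.1.1.1 + w.len - n) := by
  have h1 := w.1.1.2
  have h2 := w.1.2.2
  unfold Arc.len dst
  split_ifs <;> omega

theorem pair_compat (w v : Arc n) :
    (∀ e ∈ ({dg w, centralSym n (dg w)} : Finset (Finset (ZMod (2 * n)))),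
      ∀ f ∈ ({dg v, centralSym n (dg v)} : Finset (Finset (ZMod (2 * n)))),
      ¬ Crosses (2 * n) e f) ↔ adj Finset.univ (.inr w) (.inr v) := by
  have h1 := w.len_lt
  have h2 := w.1.1.2
  have h3 := w.two_le
  have hlt := lo_lt_hi w
  have h1' := v.len_lt
  have h2' := v.1.1.2
  have h3' := v.two_le
  have hlt' := lo_lt_hi v
  rw [centralSym_dg, centralSym_dg]
  simp only [Finset.mem_insert, Finset.mem_singleton, forall_eq_or_imp, forall_eq]
  rw [dg, dg, crosses_iff (by omega) (by omega) (by omega) (by omega),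
    crosses_iff (by omega) (by omega) hlt'.1 hlt'.2,
    crosses_iff hlt.1 hlt.2 (by omega) (by omega),
    crosses_iff hlt.1 hlt.2 hlt'.1 hlt'.2]
  have e := w.end_eq
  have e' := v.end_eq
  have h4 := w.1.2.2
  have h4' := v.1.2.2
  have A : ∀ u : Arc n, ∀ x, u.out x ↔ ¬ (0 < dst u.1.1 x ∧ dst u.1.1 x < u.len) :=
    fun u x => Iff.rfl
  rcases le_total v.len w.len with h | h
  · rw [adj_inr_of_le _ _ _ h, A, A]
    unfold lo hi
    generalize w.len = k at *
    generalize v.len = m at *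
    unfold dst
    rcases e with ⟨e0, e⟩ | ⟨e0, e⟩ <;> rcases e' with ⟨e0', e'⟩ | ⟨e0', e'⟩ <;>
      simp only [e, e', if_pos e0, if_pos e0', if_neg (Nat.not_lt.2 e0),
        if_neg (Nat.not_lt.2 e0')] <;> split_ifs <;> omega
  · rw [show adj Finset.univ (.inr w) (.inr v) ↔ adj Finset.univ (.inr v) (.inr w) from
      ⟨adj_symm _ _ _, adj_symm _ _ _⟩, adj_inr_of_le _ _ _ h, A, A]
    unfold lo hi
    generalize w.len = k at *
    generalize v.len = m at *
    unfold dst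
    rcases e with ⟨e0, e⟩ | ⟨e0, e⟩ <;> rcases e' with ⟨e0', e'⟩ | ⟨e0', e'⟩ <;>
      simp only [e, e', if_pos e0, if_pos e0', if_neg (Nat.not_lt.2 e0),
        if_neg (Nat.not_lt.2 e0')] <;> split_ifs <;> omega

end model


theorem adj_red_blue {n : ℕ} [NeZero n] (a b : Fin n) :
    (dst a b ≠ 1 ∧ ∀ w ∈ (Finset.univ : Finset (Arc n)), w.1 ≠ (a, b)) ↔ a = b := by
  constructor
  · rintro ⟨h1, h2⟩
    by_contra hc
    have h3 := dst_ne hc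
    exact h2 ⟨(a, b), by simp only; omega⟩ (Finset.mem_univ _) rfl
  · rintro rfl
    refine ⟨by rw [dst_self]; omega, ?_⟩
    intro w _ h
    have := w.2
    rw [h, dst_self] at this
    omega

theorem adj_iff_compat {n : ℕ} [NeZero n] (x y : Idx n) :
    adj Finset.univ x y ↔ DCompat n (emb x) (emb y) := by
  rcases x with (a | a) | w <;> rcases y with (b | b) | v
  · exact Iff.rfl
  · exact (adj_red_blue a b).trans ⟨fun h => congrArg diam h, diam_inj⟩
  · exact (diam_compat a v).symm
  · exact (adj_red_blue b a).trans ⟨fun h => congrArg diam h.symm, fun h => (diam_inj h).symm⟩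
  · exact Iff.rfl
  · exact (diam_compat a v).symm
  · exact (diam_compat b w).symm
  · exact (diam_compat b w).symm
  · exact (pair_compat w v).symm

/-- generalized associahedra of type `D_n` lie in `𝒫^cube`: they can be
obtained from the cube `[0,1]^n` by successively shaving off faces of codimension 2. -/
theorem typeD_in_Pcube (n d : ℕ) (hn : 2 ≤ n) (P : Set (Fin d → ℝ))
    (hP : RealizesD n P) :
    ∃ (m : ℕ) (Q : Fin (m + 1) → Set (Fin n → ℝ)),
      Q 0 = Set.Icc (0 : Fin n → ℝ) 1 ∧
      (∀ i : Fin m, ObtainedByShaving (Q i.castSucc) (Q i.succ)) ∧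
      CombEquiv (Q (Fin.last m)) P := by
  classical
  obtain ⟨φ, -, hflag, hdim, hfac, hinj, hsurj, hcomp⟩ := hP
  have : NeZero n := ⟨by omega⟩
  let ψ : Idx n → Set (Fin d → ℝ) := fun i => φ ⟨emb i, emb_mem hn i⟩
  have hψfac : ∀ i, IsFacetOf (ψ i) P := fun i => hfac _
  have hψinj : Function.Injective ψ := fun i j h => emb_inj (congrArg Subtype.val (hinj h))
  have hψsurj : ∀ F, IsFacetOf F P → ∃ i, ψ i = F := by
    intro F hF
    obtain ⟨⟨x, hx⟩, rfl⟩ := hsurj F hF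
    obtain ⟨i, rfl⟩ := emb_surj x hx
    exact ⟨i, rfl⟩
  have hψcomp : ∀ i j, (ψ i ∩ ψ j).Nonempty ↔ adj Finset.univ i j := by
    intro i j
    by_cases hij : i = j
    · subst hij
      rw [Set.inter_self]
      exact iff_of_true (hψfac i).1.1 (adj_refl _ _)
    · rw [adj_iff_compat]
      exact hcomp ⟨emb i, emb_mem hn i⟩ ⟨emb j, emb_mem hn j⟩
        (fun h => hij (emb_inj (congrArg Subtype.val h)))
  have hd1 : 1 ≤ polyDim P := by omega
  obtain ⟨l, c, hrep, hl⟩ := simple_rep hflag.1 hd1 ψ hψfac hψinj hψsurj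
  obtain ⟨Q, c', hchain, hrepQ, -, hQ⟩ := chain (n := n) hn Finset.univ
    (fun _ _ _ _ => Finset.mem_univ _)
  have huniv : Finset.disjSum (Finset.univ : Finset (Fin n ⊕ Fin n))
      (Finset.univ : Finset (Arc n)) = Finset.univ := Finset.univ_disjSum_univ
  rw [huniv] at hrepQ hQ
  have hcomb : CombEquiv Q P := by
    refine hrepQ.combEquiv hrep ?_
    intro τ hτ
    rw [hQ τ hτ]
    constructor
    · intro h
      rcases τ.eq_empty_or_nonempty with rfl | hne
      · obtain ⟨x, hx⟩ := nonempty_of_polyDim hd1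
        exact ⟨x, hx, by simp⟩
      · obtain ⟨x, hx⟩ := hflag.2 (ψ '' (τ : Set (Idx n))) ((Finset.coe_nonempty.2 hne).image ψ)
          (by rintro _ ⟨i, -, rfl⟩; exact hψfac i)
          (by rintro _ ⟨i, hi, rfl⟩ _ ⟨j, hj, rfl⟩; exact (hψcomp i j).2 (h i hi j hj))
        have hx' : ∀ i ∈ τ, x ∈ P ∧ l i x = c i := by
          intro i hi
          have := hx (ψ i) ⟨i, hi, rfl⟩
          rw [hl i] at this
          exact this
        obtain ⟨i, hi⟩ := hne
        exact ⟨x, (hx' i hi).1, fun j hj => (hx' j hj).2⟩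
    · rintro ⟨x, hxP, hx⟩ i hi j hj
      rw [← hψcomp, hl i, hl j]
      exact ⟨x, ⟨hxP, hx i hi⟩, ⟨hxP, hx j hj⟩⟩
  obtain ⟨m, q, h0, h1, h2⟩ := seq_of_chain hchain
  exact ⟨m, q, h0, h1, by rw [h2]; exact hcomb⟩



end GalD
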